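/- arXiv:2312.17447 — 6 statements merged into one kernel-verified Lean document; each statement's English description precedes it below -/
import Mathlib

section
/- Let X ⊂ S² be a nonseparating continuum and let Y be an indecomposable continuum contained in the boundary of X. If Z is a subcontinuum of X intersecting an internal composant of Y and Z does not separate S², then either Y ⊆ Z or Z ⊆ Y. -/
/-!
Suppose neither `Y ⊆ Z` nor `Z ⊆ Y`; the contradiction is that the indecomposable continuum `Y`
would be covered by countably many proper subcontinua, although each of them is nowhere dense in
`Y` (`IsIndecomposable.not_subset_sUnion`, Baire category).

Let `C'` be a composant of `Y` other than `C`. Internality of `C` applied to `Z` gives a point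
`x₀ ∈ Z ∩ C'`. The component in `Z ∩ Y` of a point `c ∈ Z ∩ C` lies in `C`, so `Z ∩ Y` splits into
compact sets `S ∋ c` and `T ∋ x₀`. The component of `c` in `Z ∩ closure N`, for a small
neighbourhood `N` of `S`, reaches the boundary of `N` and hence leaves `Y`; by internality it meets
`C'`, necessarily in a point `x₁ ∈ S`. A proper subcontinuum `M ⊆ C'` of `Y` through `x₀` and `x₁`
then has disconnected intersection with `Z`
(`exists_properSubcontinuum_inter_not_isPreconnected`).

By Janiszewski's theorem (`isPreconnected_inter_of_not_separates_union`) `M ∪ Z` separates the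
sphere, so its complement has a component `W` disjoint from the connected set `Xᶜ`, hence disjoint
from `closure Xᶜ ⊇ Y`. Two such components coming from distinct composants are disjoint: if they
met, they would coincide, so their boundary would lie in `(M ∪ Z) ∩ (M' ∪ Z) = Z`, and `Zᶜ`, being
connected, would lie in `W`, which misses `Xᶜ ⊆ Zᶜ`. The sphere is separable, so there are only
countably many composants, and each composant is covered by countably many proper subcontinua
(`exists_countable_cover_composant`).

Janiszewski's theorem is proved in the plane with logarithms. Let `A ∩ B = P ⊔ Q` be a separation
with `p ∈ P`, `q ∈ Q`. Since `A` is connected, `(z - p) / (z - q)` has a continuous logarithm at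
positive distance from `A`, and likewise for `B`. If the complement of `A ∪ B` were connected, the
two logarithms would differ there by a constant and would glue to a logarithm `g` defined off a
small neighbourhood of `A ∩ B`. Interpolating with a bump function `χ`, equal to `1` near `P` and
to `0` near `Q` and infinity, `exp (χ g) / (z - p)` extends to a nowhere vanishing continuous
function on `ℂ` equal to `1 / (z - p)` near infinity. Such a function has a continuous logarithm,
which is impossible because its winding number along a large circle is `-1`
(`not_eqOn_inv_outside_ball`).
-/

open Set Metric Topology Filter

noncomputable section

/-- The 2-dimensional sphere, realized as the unit sphere in `ℝ³`. -/
abbrev S2 : Type := ↥(Metric.sphere (0 : EuclideanSpace ℝ (Fin 3)) 1)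

/-- A continuum is a nonempty compact connected (metric) space. -/
def IsContinuum {α : Type*} [TopologicalSpace α] (X : Set α) : Prop :=
  IsCompact X ∧ IsConnected X

/-- A continuum is indecomposable when it is not the union of two proper subcontinua. -/
def IsIndecomposable {α : Type*} [TopologicalSpace α] (X : Set α) : Prop :=
  IsContinuum X ∧
    ¬ ∃ A B : Set α, IsContinuum A ∧ A ⊆ X ∧ A ≠ X ∧
      IsContinuum B ∧ B ⊆ X ∧ B ≠ X ∧ A ∪ B = X

/-- The composant of a point `p` in a continuum `X`: the union of all proper
subcontinua of `X` containing `p`. -/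
def composant {α : Type*} [TopologicalSpace α] (X : Set α) (p : α) : Set α :=
  ⋃₀ {K : Set α | IsContinuum K ∧ K ⊆ X ∧ K ≠ X ∧ p ∈ K}

/-- `C` is a composant of `X` when it is the composant of some point of `X`. -/
def IsComposant {α : Type*} [TopologicalSpace α] (X C : Set α) : Prop :=
  ∃ p ∈ X, C = composant X p

/-- A composant `C` of `X` is internal when every continuum intersecting `C`
but not contained in `X` intersects every composant of `X`. -/
def IsInternalComposant {α : Type*} [TopologicalSpace α] (X C : Set α) : Prop :=
  IsComposant X C ∧
    ∀ L : Set α, IsContinuum L → (L ∩ C).Nonempty → ¬ L ⊆ X →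
      ∀ C' : Set α, IsComposant X C' → (L ∩ C').Nonempty

/-- An irreducible decomposition of a continuum `X`: a finite collection of
indecomposable subcontinua of `X` whose union is `X`, none of which is contained
in the union of the others. -/
def IsIrreducibleDecomposition {α : Type*} [TopologicalSpace α]
    (X : Set α) {n : ℕ} (A : Fin n → Set α) : Prop :=
  (∀ i, IsIndecomposable (A i) ∧ A i ⊆ X) ∧
    X = ⋃ i, A i ∧
    ∀ j, ¬ A j ⊆ ⋃ i ∈ ({j}ᶜ : Set (Fin n)), A i

/-- A set `A` separates the sphere when its complement is disconnected. -/
def Separates (A : Set S2) : Prop := ¬ IsPreconnected Aᶜ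

/-- A simple arc in the sphere with endpoints `a` and `b`. -/
def IsSimpleArc (A : Set S2) (a b : S2) : Prop :=
  ∃ γ : ℝ → S2, ContinuousOn γ (Icc 0 1) ∧ InjOn γ (Icc 0 1) ∧
    γ '' Icc 0 1 = A ∧ γ 0 = a ∧ γ 1 = b

/-- `f` is locally topologically conjugate, at the point `c`, to the map
`z ↦ z ^ k` of the unit disk (so `c` is a critical point of local degree `k - 1`
when `k ≥ 2`). -/
def LocallyZPowAt (f : S2 → S2) (c : S2) (k : ℕ) : Prop :=
  ∃ (φ : PartialHomeomorph S2 ℂ) (ψ : PartialHomeomorph ℂ S2),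
    c ∈ φ.source ∧ φ.target = Metric.ball (0 : ℂ) 1 ∧
    ψ.source = Metric.ball (0 : ℂ) 1 ∧ f c ∈ ψ.target ∧
    ∀ x ∈ φ.source, f x = ψ ((φ x) ^ k)

/-- A branched covering of the sphere of degree `d`: a continuous map which is a
`d`-fold covering map away from a finite set of critical points, near each of which
it is locally conjugate to `z ↦ z ^ k` on the unit disk for some `k ≥ 2`. -/
def IsBranchedCovering (f : S2 → S2) (d : ℕ) : Prop :=
  Continuous f ∧
    ∃ Crit : Set S2, Crit.Finite ∧
      (∀ c ∈ Crit, ∃ k, 2 ≤ k ∧ LocallyZPowAt f c k) ∧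
      IsCoveringMapOn f ((f '' Crit)ᶜ) ∧
      ∀ y ∉ f '' Crit, (f ⁻¹' {y}).ncard = d

/-- `f` is a polynomial-like mapping of degree `d`, with fully invariant simply
connected region `R` (whose complement has more than one point) containing the
critical point `c` of local degree `d - 1`.  The Julia set is `J(f) = frontier R`
and the filled Julia set is `Rᶜ`. -/
def IsPolynomialLike (f : S2 → S2) (d : ℕ) (R : Set S2) (c : S2) : Prop :=
  IsBranchedCovering f d ∧
    IsOpen R ∧ IsConnected R ∧ SimplyConnectedSpace ↥R ∧
    Set.Nontrivial Rᶜ ∧ f ⁻¹' R = R ∧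
    c ∈ R ∧ LocallyZPowAt f c d

/-- A crosscut of a region `U`: a simple arc contained in the closure of `U`
meeting the boundary of `U` exactly at its two (distinct) endpoints. -/
def IsCrosscut (U A : Set S2) : Prop :=
  ∃ a b : S2, a ≠ b ∧ IsSimpleArc A a b ∧ A ⊆ closure U ∧
    A ∩ frontier U = {a, b}

/-- A fundamental chain in `U`: a nested sequence of regions `Rc k`, each a
connected component of `U \ A k` for crosscuts `A k` whose diameters tend to `0`.
The impression of the corresponding prime end is `⋂ k, closure (Rc k)`. -/
def IsFundamentalChain (U : Set S2) (Rc : ℕ → Set S2) : Prop :=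
  ∃ A : ℕ → Set S2,
    (∀ k, IsCrosscut U (A k)) ∧
    (∀ k, ∃ x ∈ U \ A k, Rc k = connectedComponentIn (U \ A k) x) ∧
    (∀ k, Rc (k + 1) ⊆ Rc k) ∧
    Tendsto (fun k => Metric.diam (A k)) atTop (nhds 0)

end

/-! ### Continuous logarithms in the plane -/

lemma mem_slitPlane_div_of_dist_lt {a b z : ℂ} (hz : dist a b < dist z b) :
    (z - a) / (z - b) ∈ Complex.slitPlane := by
  have hzb : z - b ≠ 0 := by
    intro h
    rw [dist_eq_norm z b, h, norm_zero] at hz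
    exact absurd hz (not_lt.2 dist_nonneg)
  have e : (z - a) / (z - b) = 1 - (a - b) / (z - b) := by
    field_simp
    ring
  rw [e]
  have hn : ‖(a - b) / (z - b)‖ < 1 := by
    rw [norm_div, div_lt_one (norm_pos_iff.2 hzb), ← dist_eq_norm, ← dist_eq_norm]
    exact hz
  left
  have := (Complex.abs_re_le_norm ((a - b) / (z - b)))
  have h2 := (abs_le.1 this).2
  rw [Complex.sub_re, Complex.one_re]
  linarith

/-- At distance at least `δ` from a connected set containing `p` and `q`, the function
`(z - p) / (z - q)` has a continuous logarithm: `p` and `q` are joined by a chain of points of `A`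
with steps shorter than `δ`, and for consecutive points `a`, `b` of the chain the principal
logarithm of `(z - a) / (z - b)` is continuous there. -/
lemma exists_log_div_of_isPreconnected {A : Set ℂ} (hA : IsPreconnected A) {p q : ℂ}
    (hp : p ∈ A) (hq : q ∈ A) {δ : ℝ} (hδ : 0 < δ) :
    ∃ g : ℂ → ℂ, ContinuousOn g {z | ∀ a ∈ A, δ ≤ dist z a} ∧
      ∀ z, (∀ a ∈ A, δ ≤ dist z a) → Complex.exp (g z) = (z - p) / (z - q) := by
  set F : Set ℂ := {z | ∀ a ∈ A, δ ≤ dist z a} with hF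
  have hne : ∀ a ∈ A, ∀ z ∈ F, z - a ≠ 0 := by
    intro a ha z hz h
    have := hz a ha
    rw [dist_eq_norm, h, norm_zero] at this
    linarith
  let good : ℂ → Prop := fun x => ∃ g : ℂ → ℂ, ContinuousOn g F ∧
      ∀ z ∈ F, Complex.exp (g z) = (z - p) / (z - x)
  have step : ∀ a ∈ A, ∀ b ∈ A, dist a b < δ → good a → good b := by
    rintro a ha b hb hab ⟨g, hg, hge⟩
    have hs : ∀ z ∈ F, (z - a) / (z - b) ∈ Complex.slitPlane := fun z hz =>
      mem_slitPlane_div_of_dist_lt (hab.trans_le (hz b hb))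
    refine ⟨fun z => g z + Complex.log ((z - a) / (z - b)), ?_, ?_⟩
    · refine hg.add (ContinuousOn.clog ?_ hs)
      exact ContinuousOn.div (by fun_prop) (by fun_prop) (fun z hz => hne b hb z hz)
    · intro z hz
      have h1 := hne a ha z hz
      have h2 := hne b hb z hz
      rw [Complex.exp_add, hge z hz, Complex.exp_log (div_ne_zero h1 h2)]
      field_simp
  have hgp : good p := ⟨fun _ => 0, continuousOn_const, fun z hz => by
    rw [Complex.exp_zero, div_self (hne p hp z hz)]⟩
  by_contra hcon
  have hgq : ¬ good q := fun ⟨g, h1, h2⟩ => hcon ⟨g, h1, h2⟩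
  -- points of `A` in overlapping balls are less than `δ` apart, so `step` makes these two
  -- open sets a separation of `A`
  let U : Set ℂ := ⋃ a ∈ {a ∈ A | good a}, ball a (δ / 2)
  let V : Set ℂ := ⋃ a ∈ {a ∈ A | ¬ good a}, ball a (δ / 2)
  have hU : IsOpen U := isOpen_biUnion fun _ _ => isOpen_ball
  have hV : IsOpen V := isOpen_biUnion fun _ _ => isOpen_ball
  have hUm : ∀ x ∈ A, good x → x ∈ U := fun x hx hg =>
    mem_biUnion (show x ∈ {a ∈ A | good a} from ⟨hx, hg⟩) (mem_ball_self (half_pos hδ))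
  have hVm : ∀ x ∈ A, ¬ good x → x ∈ V := fun x hx hg =>
    mem_biUnion (show x ∈ {a ∈ A | ¬ good a} from ⟨hx, hg⟩) (mem_ball_self (half_pos hδ))
  obtain ⟨x, hxA, hxU, hxV⟩ := hA U V hU hV
    (fun x hx => by by_cases h : good x; exacts [Or.inl (hUm x hx h), Or.inr (hVm x hx h)])
    ⟨p, hp, hUm p hp hgp⟩ ⟨q, hq, hVm q hq hgq⟩
  obtain ⟨a, ⟨haA, hag⟩, hxa⟩ := mem_iUnion₂.1 hxU
  obtain ⟨b, ⟨hbA, hbg⟩, hxb⟩ := mem_iUnion₂.1 hxV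
  refine hbg (step a haA b hbA ?_ hag)
  have := dist_triangle_left a b x
  rw [mem_ball] at hxa hxb
  linarith

lemma exists_eq_const_of_exp_const {α : Type*} [TopologicalSpace α] {S : Set α}
    (hS : IsPreconnected S) {f : α → ℂ} (hf : ContinuousOn f S) (d : ℂ)
    (hd : ∀ x ∈ S, Complex.exp (f x) = d) : ∃ c, ∀ x ∈ S, f x = c := by
  rcases S.eq_empty_or_nonempty with rfl | ⟨x0, hx0⟩
  · exact ⟨0, by simp⟩
  refine ⟨f x0, fun x hx => ?_⟩
  refine Complex.isCoveringMap_exp.constOn_of_comp hS hf (fun a ha b hb => ?_) hx hx0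
  exact Subtype.ext ((hd a ha).trans (hd b hb).symm)

lemma exists_continuous_log {h : ℂ → ℂ} (hc : Continuous h) (h0 : ∀ z, h z ≠ 0) :
    ∃ k : ℂ → ℂ, Continuous k ∧ ∀ z, Complex.exp (k z) = h z := by
  have hU : IsSimplyConnected (univ : Set ℂ) :=
    (Homeomorph.Set.univ ℂ).toHomotopyEquiv.simplyConnectedSpace
  obtain ⟨f, hf, he⟩ := Complex.exists_continuousOn_eqOn_exp_comp hU isOpen_univ
    (g := h) hc.continuousOn (by rintro ⟨z, -, hz⟩; exact h0 z hz)
  exact ⟨f, continuousOn_univ.1 hf, fun z => he (mem_univ z)⟩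

/-- A nowhere vanishing continuous function on the plane cannot equal `1 / (z - p)` near
infinity: the latter has winding number `-1` along large circles. -/
lemma not_eqOn_inv_outside_ball {h : ℂ → ℂ} (hc : Continuous h) (h0 : ∀ z, h z ≠ 0)
    (p : ℂ) (R : ℝ) : ∃ z, R < ‖z‖ ∧ h z ≠ 1 / (z - p) := by
  by_contra hcon
  push Not at hcon
  obtain ⟨k, hk, hke⟩ := exists_continuous_log hc h0
  set r : ℝ := ‖p‖ + |R| + 1 with hr
  have hr0 : 0 < r := by positivity
  let γ : ℝ → ℂ := fun t => p + r * Complex.exp (t * Complex.I)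
  have hγ : ∀ t, h (γ t) = 1 / (r * Complex.exp (t * Complex.I)) := by
    intro t
    have e : γ t - p = r * Complex.exp (t * Complex.I) := by simp [γ]
    rw [hcon (γ t), e]
    have h1 : ‖(r : ℂ) * Complex.exp (t * Complex.I)‖ = r := by
      rw [norm_mul, Complex.norm_exp_ofReal_mul_I, mul_one, Complex.norm_real,
        Real.norm_of_nonneg hr0.le]
    have h2 : ‖(r : ℂ) * Complex.exp (t * Complex.I)‖ ≤ ‖γ t‖ + ‖p‖ := by
      rw [← e]; exact norm_sub_le _ _
    have := le_abs_self R
    rw [h1] at h2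
    linarith
  obtain ⟨c, hcst⟩ := exists_eq_const_of_exp_const (S := (univ : Set ℝ)) isPreconnected_univ
    (f := fun t : ℝ => k (γ t) + t * Complex.I) (Continuous.continuousOn (by fun_prop)) (1 / r)
    (fun t _ => by
      have h3 : (r : ℂ) ≠ 0 := by exact_mod_cast hr0.ne'
      have h4 := Complex.exp_ne_zero (t * Complex.I)
      rw [Complex.exp_add, hke, hγ]
      field_simp)
  have e1 := hcst 0 (mem_univ _)
  have e2 := hcst (2 * Real.pi) (mem_univ _)
  have e3 : γ (2 * Real.pi) = γ 0 := by
    simp only [γ]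
    push_cast
    rw [Complex.exp_two_pi_mul_I]
    simp
  simp only [e3] at e2
  rw [← e1] at e2
  push_cast at e2
  have := add_left_cancel e2
  rw [zero_mul] at this
  exact Complex.two_pi_I_ne_zero this

/-! ### Janiszewski's theorem in the plane -/

lemma exists_isPreconnected_isCompact_between {W K : Set ℂ} (hWo : IsOpen W)
    (hW : IsPreconnected W) (hK : IsCompact K) (hKW : K ⊆ W) :
    ∃ S, IsPreconnected S ∧ IsCompact S ∧ K ⊆ S ∧ S ⊆ W := by
  rcases K.eq_empty_or_nonempty with rfl | ⟨w, hwK⟩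
  · exact ⟨∅, isPreconnected_empty, isCompact_empty, Subset.rfl, empty_subset _⟩
  have hwW := hKW hwK
  have hpc : IsPathConnected W := hWo.isConnected_iff_isPathConnected.1 ⟨⟨w, hwW⟩, hW⟩
  have key : ∀ x ∈ K, ∃ T ∈ 𝓝 x, IsPreconnected T ∧ IsCompact T ∧ w ∈ T ∧ T ⊆ W := by
    intro x hx
    obtain ⟨r, hr, hrW⟩ := Metric.nhds_basis_closedBall.mem_iff.1 (hWo.mem_nhds (hKW hx))
    obtain ⟨γ, hγ⟩ := hpc.joinedIn w hwW x (hKW hx)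
    refine ⟨range γ ∪ closedBall x r, mem_of_superset (closedBall_mem_nhds x hr)
      subset_union_right, ?_, (isCompact_range γ.continuous).union
      (isCompact_closedBall x r), Or.inl ⟨0, γ.source⟩, ?_⟩
    · exact (isPreconnected_range γ.continuous).union x ⟨1, γ.target⟩
        (mem_closedBall_self hr.le) (convex_closedBall x r).isPreconnected
    · exact union_subset (range_subset_iff.2 hγ) hrW
  choose! T hTn hTp hTc hTw hTW using key
  obtain ⟨t, htK, ht⟩ := hK.elim_nhds_subcover T hTn
  refine ⟨⋃ x ∈ t, T x, ?_, t.isCompact_biUnion fun x hx => hTc x (htK x hx), ht,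
    iUnion₂_subset fun x hx => hTW x (htK x hx)⟩
  have e : (⋃ x ∈ t, T x) = ⋃₀ (T '' (t : Set ℂ)) := by simp [sUnion_image]
  rw [e]
  refine isPreconnected_sUnion w _ ?_ ?_
  · rintro _ ⟨x, hx, rfl⟩; exact hTw x (htK x hx)
  · rintro _ ⟨x, hx, rfl⟩; exact hTp x (htK x hx)

/-- If the complement of `A ∪ B` is connected, the logarithms of `(z - p) / (z - q)` off a
neighbourhood of `A` and off a neighbourhood of `B` glue, in a bounded region, to a logarithm off a
neighbourhood of `A ∩ B`: the compact set where both are needed lies in a connected compact subset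
of the complement, on which they differ by a constant. -/
lemma exists_log_div_of_union {A B : Set ℂ} (hAc : IsCompact A) (hBc : IsCompact B)
    (hA : IsPreconnected A) (hB : IsPreconnected B) (hW : IsPreconnected (A ∪ B)ᶜ)
    {p q : ℂ} (hp : p ∈ A ∩ B) (hq : q ∈ A ∩ B) {ε : ℝ} (hε : 0 < ε) (R : ℝ) :
    ∃ g : ℂ → ℂ,
      ContinuousOn g (({z | ε < infDist z A} ∪ {z | ε < infDist z B}) ∩ ball 0 R) ∧
      ∀ z ∈ (({z | ε < infDist z A} ∪ {z | ε < infDist z B}) ∩ ball 0 R),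
        Complex.exp (g z) = (z - p) / (z - q) := by
  have hAne : A.Nonempty := ⟨p, hp.1⟩
  have hBne : B.Nonempty := ⟨p, hp.2⟩
  have hcA : Continuous fun z => infDist z A := continuous_infDist_pt A
  have hcB : Continuous fun z => infDist z B := continuous_infDist_pt B
  let K : Set ℂ := ({z | ε ≤ infDist z A} ∩ {z | ε ≤ infDist z B}) ∩ closedBall 0 R
  have hK : IsCompact K := (isCompact_closedBall 0 R).inter_left
    ((isClosed_le continuous_const hcA).inter (isClosed_le continuous_const hcB))
  have hKW : K ⊆ (A ∪ B)ᶜ := by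
    rintro z ⟨⟨h1, h2⟩, -⟩ (h | h)
    · have : ε ≤ infDist z A := h1
      rw [infDist_zero_of_mem h] at this; linarith
    · have : ε ≤ infDist z B := h2
      rw [infDist_zero_of_mem h] at this; linarith
  have hWo : IsOpen (A ∪ B)ᶜ := (hAc.union hBc).isClosed.isOpen_compl
  obtain ⟨S, hSp, hSc, hKS, hSW⟩ := exists_isPreconnected_isCompact_between hWo hW hK hKW
  obtain ⟨η, hη, hηW⟩ := hSc.exists_cthickening_subset_open hWo hSW
  set δ := min ε η with hδ
  have hδ0 : 0 < δ := lt_min hε hη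
  have hfar : ∀ z ∈ S, ∀ a ∈ A ∪ B, δ ≤ dist z a := by
    intro z hz a ha
    by_contra hlt
    push Not at hlt
    refine hηW (mem_cthickening_of_dist_le a z η S hz ?_) ha
    rw [dist_comm]
    exact hlt.le.trans (min_le_right _ _)
  have hfarA : ∀ z, ε < infDist z A → ∀ a ∈ A, δ ≤ dist z a := fun z hz a ha =>
    (min_le_left _ _).trans (hz.le.trans (infDist_le_dist_of_mem ha))
  have hfarB : ∀ z, ε < infDist z B → ∀ a ∈ B, δ ≤ dist z a := fun z hz a ha =>
    (min_le_left _ _).trans (hz.le.trans (infDist_le_dist_of_mem ha))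
  obtain ⟨gA, hgA, hgAe⟩ := exists_log_div_of_isPreconnected hA hp.1 hq.1 hδ0
  obtain ⟨gB, hgB, hgBe⟩ := exists_log_div_of_isPreconnected hB hp.2 hq.2 hδ0
  obtain ⟨c, hc1, hcS⟩ : ∃ c, Complex.exp c = 1 ∧ ∀ z ∈ S, gA z = gB z + c := by
    have hexp : ∀ z ∈ S, Complex.exp (gA z - gB z) = 1 := by
      intro z hz
      have ha : ∀ a ∈ A, δ ≤ dist z a := fun a ha => hfar z hz a (Or.inl ha)
      have hb : ∀ a ∈ B, δ ≤ dist z a := fun a ha => hfar z hz a (Or.inr ha)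
      rw [Complex.exp_sub, hgAe z ha, ← hgBe z hb, div_self (Complex.exp_ne_zero _)]
    obtain ⟨c, hc⟩ := exists_eq_const_of_exp_const hSp (f := fun z => gA z - gB z)
      ((hgA.mono fun z hz a ha => hfar z hz a (Or.inl ha)).sub
        (hgB.mono fun z hz a ha => hfar z hz a (Or.inr ha))) 1 hexp
    rcases S.eq_empty_or_nonempty with rfl | ⟨s, hs⟩
    · exact ⟨0, Complex.exp_zero, by simp⟩
    · exact ⟨c, by rw [← hc s hs, hexp s hs], fun z hz => by rw [← hc z hz]; ring⟩
  classical
  let g : ℂ → ℂ := fun z => if ε < infDist z A then gA z else gB z + c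
  have eA : ∀ z, ε < infDist z A → g z = gA z := fun z hz => if_pos hz
  have eB : ∀ z ∈ ball (0 : ℂ) R, ε < infDist z B → g z = gB z + c := by
    intro z hzR hz
    by_cases h : ε < infDist z A
    · rw [eA z h]
      exact hcS z (hKS ⟨⟨h.le, hz.le⟩, ball_subset_closedBall hzR⟩)
    · exact if_neg h
  have oA : IsOpen {z | ε < infDist z A} := isOpen_lt continuous_const hcA
  have oB : IsOpen {z | ε < infDist z B} := isOpen_lt continuous_const hcB
  refine ⟨g, ?_, ?_⟩
  · rintro z ⟨h | h, hzR⟩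
    · refine ContinuousAt.continuousWithinAt ?_
      have h1 : ContinuousAt gA z := (hgA.mono hfarA).continuousAt (oA.mem_nhds h)
      exact h1.congr (eventually_of_mem (oA.mem_nhds h) fun y hy => (eA y hy).symm)
    · refine ContinuousAt.continuousWithinAt ?_
      have h1 : ContinuousAt (fun z => gB z + c) z :=
        ((hgB.mono hfarB).continuousAt (oB.mem_nhds h)).add continuousAt_const
      exact h1.congr (eventually_of_mem ((oB.inter isOpen_ball).mem_nhds ⟨h, hzR⟩)
        fun y hy => (eB y hy.2 hy.1).symm)
  · rintro z ⟨h | h, hzR⟩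
    · rw [eA z h, hgAe z (hfarA z h)]
    · rw [eB z hzR h, Complex.exp_add, hc1, mul_one, hgBe z (hfarB z h)]

/-- Janiszewski's theorem in the plane: if the intersection of two compact connected sets is
disconnected, their union separates the plane. -/
theorem isPreconnected_inter_of_compl_union {A B : Set ℂ} (hAc : IsCompact A)
    (hBc : IsCompact B) (hA : IsPreconnected A) (hB : IsPreconnected B)
    (hW : IsPreconnected (A ∪ B)ᶜ) : IsPreconnected (A ∩ B) := by
  have hABc : IsCompact (A ∩ B) := hAc.inter hBc
  rw [isPreconnected_iff_subset_of_fully_disjoint_closed hABc.isClosed]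
  intro u v hu hv huv hdisj
  by_contra hcon
  rw [not_or] at hcon
  obtain ⟨q, hq, hqu⟩ := not_subset.1 hcon.1
  obtain ⟨p, hp, hpv⟩ := not_subset.1 hcon.2
  have hpu : p ∈ u := (huv hp).resolve_right hpv
  have hqv : q ∈ v := (huv hq).resolve_left hqu
  have hPc : IsCompact (A ∩ B ∩ u) := hABc.inter_right hu
  have hQc : IsCompact (A ∩ B ∩ v) := hABc.inter_right hv
  obtain ⟨O₂, hO₂, hPO₂, hO₂Q, hO₂c⟩ := exists_open_between_and_isCompact_closure hPc
    hQc.isClosed.isOpen_compl (fun x hx hx' => hdisj.le_bot ⟨hx.2, hx'.2⟩)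
  obtain ⟨O₁, hO₁, hPO₁, hO₁₂, -⟩ := exists_open_between_and_isCompact_closure hPc hO₂ hPO₂
  obtain ⟨χ, hχ0, hχ1, -⟩ := exists_continuous_zero_one_of_isClosed hO₂.isClosed_compl
    (isClosed_closure (s := O₁)) (disjoint_left.2 fun x hx hx' => hx (hO₁₂ hx'))
  obtain ⟨R, hR⟩ : ∃ R, closure O₂ ⊆ ball 0 R := hO₂c.isBounded.subset_ball 0
  let E := closure O₂ \ O₁
  have hEc : IsCompact E := hO₂c.diff hO₁
  have hAcl := hAc.isClosed
  have hBcl := hBc.isClosed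
  have hEpos : ∀ z ∈ E, 0 < max (infDist z A) (infDist z B) := by
    rintro z ⟨hz2, hz1⟩
    by_cases hzA : z ∈ A
    · have hzB : z ∉ B := by
        intro hzB
        rcases huv ⟨hzA, hzB⟩ with h | h
        · exact hz1 (hPO₁ ⟨⟨hzA, hzB⟩, h⟩)
        · exact hO₂Q hz2 ⟨⟨hzA, hzB⟩, h⟩
      exact lt_max_of_lt_right ((hBcl.notMem_iff_infDist_pos ⟨p, hp.2⟩).1 hzB)
    · exact lt_max_of_lt_left ((hAcl.notMem_iff_infDist_pos ⟨p, hp.1⟩).1 hzA)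
  obtain ⟨ε', hε', hEε'⟩ := hEc.exists_forall_le' (f := fun z => max (infDist z A) (infDist z B))
    (((continuous_infDist_pt A).max (continuous_infDist_pt B)).continuousOn) hEpos
  obtain ⟨g, hg, hge⟩ := exists_log_div_of_union hAc hBc hA hB hW hp hq (half_pos hε') R
  set D : Set ℂ := ({z | ε' / 2 < infDist z A} ∪ {z | ε' / 2 < infDist z B}) ∩ ball 0 R with hD
  have hDo : IsOpen D := ((isOpen_lt continuous_const (continuous_infDist_pt A)).union
    (isOpen_lt continuous_const (continuous_infDist_pt B))).inter isOpen_ball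
  have hED : E ⊆ D := by
    intro z hz
    have h1 : ε' / 2 < max (infDist z A) (infDist z B) := (half_lt_self hε').trans_le (hEε' z hz)
    exact ⟨lt_max_iff.1 h1, hR hz.1⟩
  have hnD : ∀ z ∈ A ∩ B, z ∉ D := by
    rintro z hz ⟨h | h, -⟩
    · have : ε' / 2 < infDist z A := h
      rw [infDist_zero_of_mem hz.1] at this; linarith
    · have : ε' / 2 < infDist z B := h
      rw [infDist_zero_of_mem hz.2] at this; linarith
  have hO₁cl : O₁ ⊆ closure O₂ := (subset_closure.trans hO₁₂).trans subset_closure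
  have hpO₁ : p ∈ O₁ := hPO₁ ⟨hp, hpu⟩
  have hqO₁ : q ∉ O₁ := fun h => hO₂Q (hO₁cl h) ⟨hq, hqv⟩
  classical
  -- the three formulas agree on overlaps: `χ = 1` on `O₁` and `χ = 0` off `O₂`
  let h : ℂ → ℂ := fun z => if z ∈ D then Complex.exp (χ z * g z) / (z - p)
    else if z ∈ O₁ then 1 / (z - q) else 1 / (z - p)
  have hsub : ∀ {z w : ℂ}, z ≠ w → z - w ≠ 0 := fun h => sub_ne_zero.2 h
  have hDp : ∀ z ∈ D, z ≠ p := fun z hz e => hnD p hp (e ▸ hz)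
  have hDq : ∀ z ∈ D, z ≠ q := fun z hz e => hnD q hq (e ▸ hz)
  have e1 : ∀ z ∈ D, h z = Complex.exp (χ z * g z) / (z - p) := fun z hz => if_pos hz
  have e2 : ∀ z ∈ O₁, h z = 1 / (z - q) := by
    intro z hz
    by_cases hzD : z ∈ D
    · have h3 := hsub (hDp z hzD)
      have h4 := hsub (hDq z hzD)
      rw [e1 z hzD, hχ1 (subset_closure hz), Pi.one_apply, Complex.ofReal_one, one_mul, hge z hzD]
      field_simp
    · simp only [h, if_neg hzD, if_pos hz]
  have e3 : ∀ z ∈ (closure O₂)ᶜ, h z = 1 / (z - p) := by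
    intro z hz
    have hz1 : z ∉ O₁ := fun h => hz (hO₁cl h)
    have hz2 : z ∈ O₂ᶜ := fun h => hz (subset_closure h)
    by_cases hzD : z ∈ D
    · rw [e1 z hzD, hχ0 hz2, Pi.zero_apply, Complex.ofReal_zero, zero_mul, Complex.exp_zero]
    · simp only [h, if_neg hzD, if_neg hz1]
  have cover : ∀ z, z ∈ D ∨ z ∈ O₁ ∨ z ∈ (closure O₂)ᶜ := by
    intro z
    by_cases h1 : z ∈ closure O₂
    · by_cases h2 : z ∈ O₁
      · exact Or.inr (Or.inl h2)
      · exact Or.inl (hED ⟨h1, h2⟩)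
    · exact Or.inr (Or.inr h1)
  have hO₁q : ∀ z ∈ O₁, z ≠ q := fun z hz e => hqO₁ (e ▸ hz)
  have hO₂p : ∀ z ∈ (closure O₂)ᶜ, z ≠ p := fun z hz e => hz (e ▸ hO₁cl hpO₁)
  have hcont : Continuous h := by
    rw [continuous_iff_continuousAt]
    intro z
    rcases cover z with hz | hz | hz
    · have h1 : ContinuousAt (fun z => Complex.exp (χ z * g z) / (z - p)) z := by
        have hgz : ContinuousAt g z := hg.continuousAt (hDo.mem_nhds hz)
        have hχz : ContinuousAt (fun z => (χ z : ℂ)) z :=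
          (Complex.continuous_ofReal.comp χ.continuous).continuousAt
        exact ((hχz.mul hgz).cexp).div (by fun_prop) (hsub (hDp z hz))
      exact h1.congr (eventually_of_mem (hDo.mem_nhds hz) fun y hy => (e1 y hy).symm)
    · have h1 : ContinuousAt (fun z => 1 / (z - q)) z :=
        continuousAt_const.div (by fun_prop) (hsub (hO₁q z hz))
      exact h1.congr (eventually_of_mem (hO₁.mem_nhds hz) fun y hy => (e2 y hy).symm)
    · have h1 : ContinuousAt (fun z => 1 / (z - p)) z :=
        continuousAt_const.div (by fun_prop) (hsub (hO₂p z hz))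
      exact h1.congr (eventually_of_mem (isClosed_closure.isOpen_compl.mem_nhds hz)
        fun y hy => (e3 y hy).symm)
  have hne : ∀ z, h z ≠ 0 := by
    intro z
    rcases cover z with hz | hz | hz
    · rw [e1 z hz]
      exact div_ne_zero (Complex.exp_ne_zero _) (hsub (hDp z hz))
    · rw [e2 z hz]
      exact div_ne_zero one_ne_zero (hsub (hO₁q z hz))
    · rw [e3 z hz]
      exact div_ne_zero one_ne_zero (hsub (hO₂p z hz))
  obtain ⟨z, hzR, hz⟩ := not_eqOn_inv_outside_ball hcont hne p R
  refine hz (e3 z fun hzO => ?_)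
  have := hR hzO
  rw [mem_ball_zero_iff] at this
  exact lt_asymm this hzR

/-! ### Janiszewski's theorem in the sphere -/

lemma isPreconnected_norm_gt (R : ℝ) : IsPreconnected {z : ℂ | R < ‖z‖} := by
  have e : {z : ℂ | R < ‖z‖} =
      (fun x : ℝ × ℝ => (x.1 : ℂ) * Complex.exp (x.2 * Complex.I)) '' (Ioi R ×ˢ univ) := by
    ext z
    constructor
    · intro hz
      exact ⟨(‖z‖, z.arg), ⟨hz, mem_univ _⟩, Complex.norm_mul_exp_arg_mul_I z⟩
    · rintro ⟨⟨r, t⟩, ⟨hr, -⟩, rfl⟩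
      have hr' : R < r := hr
      show R < ‖(r : ℂ) * Complex.exp (t * Complex.I)‖
      rw [norm_mul, Complex.norm_exp_ofReal_mul_I, mul_one, Complex.norm_real]
      exact hr'.trans_le (le_abs_self r)
  rw [e]
  exact (isPreconnected_Ioi.prod isPreconnected_univ).image _ (by fun_prop)

lemma exists_isOpenEmbedding_range_eq_compl (v : S2) :
    ∃ ψ : ℂ → S2, IsOpenEmbedding ψ ∧ range ψ = {v}ᶜ := by
  have : Fact (Module.finrank ℝ (EuclideanSpace ℝ (Fin 3)) = 2 + 1) := ⟨by simp⟩
  let e := (stereographic' 2 v).symm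
  have hs : e.source = univ := by simp [e]
  have ht : e.target = {v}ᶜ := by simp [e]
  let i : ℂ ≃ₜ EuclideanSpace ℝ (Fin 2) := Complex.orthonormalBasisOneI.repr.toHomeomorph
  refine ⟨e ∘ i, (e.isOpenEmbedding hs).comp i.isOpenEmbedding, ?_⟩
  rw [range_comp, i.surjective.range_eq, ← hs, e.image_source_eq_target, ht]

/-- In the sphere, removing the point `v` from an open connected set does not disconnect it
(stated in the plane chart `ψ`): a neighbourhood of infinity in the chart is connected. -/
lemma isPreconnected_preimage_of_mem {ψ : ℂ → S2} (hψ : IsOpenEmbedding ψ) {v : S2}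
    (hr : range ψ = {v}ᶜ) {W : Set S2} (hWo : IsOpen W) (hW : IsPreconnected W) (hv : v ∈ W) :
    IsPreconnected (ψ ⁻¹' W) := by
  have hc : IsCompact (ψ ⁻¹' Wᶜ) := hψ.isInducing.isCompact_preimage'
    hWo.isClosed_compl.isCompact (by rw [hr, compl_subset_compl, singleton_subset_iff]; exact hv)
  obtain ⟨R, hR⟩ := hc.isBounded.subset_closedBall 0
  -- the exterior of a large disc is a punctured neighbourhood of `v` in the chart
  have hout : {z : ℂ | R < ‖z‖} ⊆ ψ ⁻¹' W := by
    intro z hz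
    by_contra hzW
    have := hR hzW
    rw [mem_closedBall_zero_iff] at this
    exact this.not_gt hz
  have hvψ : ∀ z, ψ z ≠ v := fun z hz => by
    have : ψ z ∈ ({v}ᶜ : Set S2) := hr ▸ mem_range_self z
    exact this hz
  have key : ∀ u u' : Set ℂ, IsOpen u → IsOpen u' → ψ ⁻¹' W ⊆ u ∪ u' →
      (ψ ⁻¹' W ∩ u').Nonempty → {z : ℂ | R < ‖z‖} ⊆ u → (ψ ⁻¹' W ∩ (u ∩ u')).Nonempty := by
    rintro u u' hu hu' hsub ⟨y, hyW, hyu'⟩ hou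
    have hcl : IsClosed (ψ '' closedBall 0 R) :=
      ((isCompact_closedBall (0 : ℂ) R).image hψ.continuous).isClosed
    obtain ⟨x, hxW, hx, z, ⟨hzu', hzW⟩, rfl⟩ := hW ((ψ '' closedBall 0 R)ᶜ ∪ ψ '' u)
      (ψ '' (u' ∩ ψ ⁻¹' W)) (hcl.isOpen_compl.union (hψ.isOpenMap _ hu))
      (hψ.isOpenMap _ (hu'.inter (hWo.preimage hψ.continuous)))
      (by
        intro x hx
        by_cases hxb : x ∈ ψ '' closedBall 0 R
        · obtain ⟨z, -, rfl⟩ := hxb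
          rcases hsub hx with h | h
          · exact Or.inl (Or.inr ⟨z, h, rfl⟩)
          · exact Or.inr ⟨z, ⟨h, hx⟩, rfl⟩
        · exact Or.inl (Or.inl hxb))
      ⟨v, hv, Or.inl fun ⟨z, _, hz⟩ => hvψ z hz⟩ ⟨ψ y, hyW, y, ⟨hyu', hyW⟩, rfl⟩
    refine ⟨z, hzW, ?_, hzu'⟩
    rcases hx with hx | ⟨z', hz', he⟩
    · refine hou ?_
      by_contra hlt
      exact hx ⟨z, by rw [mem_closedBall_zero_iff]; exact not_lt.1 hlt, rfl⟩
    · rwa [← hψ.injective he]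
  intro u u' hu hu' hsub hne hne'
  by_contra hcon
  rw [not_nonempty_iff_eq_empty] at hcon
  have hcon' : {z : ℂ | R < ‖z‖} ∩ (u ∩ u') = ∅ :=
    subset_empty_iff.1 ((inter_subset_inter_left _ hout).trans hcon.subset)
  rcases isPreconnected_iff_subset_of_disjoint.1
    (isPreconnected_norm_gt R) u u' hu hu' (hout.trans hsub) hcon' with h | h
  · exact (key u u' hu hu' hsub hne' h).ne_empty hcon
  · refine (key u' u hu' hu (by rwa [union_comm]) hne h).ne_empty ?_
    rwa [inter_comm u' u]

/-- Janiszewski's theorem in the sphere. -/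
theorem isPreconnected_inter_of_not_separates_union {A B : Set S2} (hA : IsContinuum A)
    (hB : IsContinuum B) (hne : A ∪ B ≠ univ) (hW : ¬ Separates (A ∪ B)) :
    IsPreconnected (A ∩ B) := by
  obtain ⟨v, hv⟩ := (ne_univ_iff_exists_notMem _).1 hne
  obtain ⟨ψ, hψ, hr⟩ := exists_isOpenEmbedding_range_eq_compl v
  have hAr : A ⊆ range ψ := by
    rw [hr]; rintro x hx rfl; exact hv (Or.inl hx)
  have hBr : B ⊆ range ψ := by
    rw [hr]; rintro x hx rfl; exact hv (Or.inr hx)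
  have hWo : IsOpen (A ∪ B)ᶜ := (hA.1.union hB.1).isClosed.isOpen_compl
  have h := isPreconnected_inter_of_compl_union
    (hψ.isInducing.isCompact_preimage' hA.1 hAr) (hψ.isInducing.isCompact_preimage' hB.1 hBr)
    (hA.2.isPreconnected.preimage_of_isOpenMap hψ.injective hψ.isOpenMap hAr)
    (hB.2.isPreconnected.preimage_of_isOpenMap hψ.injective hψ.isOpenMap hBr)
    (by
      rw [← preimage_union, ← preimage_compl]
      exact isPreconnected_preimage_of_mem hψ hr hWo (not_not.1 hW) hv)
  have := h.image ψ hψ.continuous.continuousOn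
  rwa [← preimage_inter, image_preimage_eq_of_subset (inter_subset_left.trans hAr)] at this

/-! ### Composants of indecomposable continua -/

section Continua

variable {α : Type*} [TopologicalSpace α]

lemma isContinuum_connectedComponentIn {X : Set α} (hX : IsCompact X) {c : α} (hc : c ∈ X) :
    IsContinuum (connectedComponentIn X c) := by
  refine ⟨?_, ⟨c, mem_connectedComponentIn hc⟩, isPreconnected_connectedComponentIn⟩
  have : CompactSpace X := isCompact_iff_compactSpace.1 hX
  rw [connectedComponentIn_eq_image hc]
  exact (isClosed_connectedComponent.isCompact).image continuous_subtype_val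

/-- `K` is a proper subcontinuum of `Y`. -/
def IsProperSubcontinuum (Y K : Set α) : Prop := IsContinuum K ∧ K ⊆ Y ∧ K ≠ Y

lemma IsIndecomposable.union_isProperSubcontinuum {Y K L : Set α} (hY : IsIndecomposable Y)
    (hK : IsProperSubcontinuum Y K) (hL : IsProperSubcontinuum Y L) (h : (K ∩ L).Nonempty) :
    IsProperSubcontinuum Y (K ∪ L) :=
  ⟨⟨hK.1.1.union hL.1.1, hK.1.2.union h hL.1.2⟩, union_subset hK.2.1 hL.2.1, fun he =>
    hY.2 ⟨K, L, hK.1, hK.2.1, hK.2.2, hL.1, hL.2.1, hL.2.2, he⟩⟩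

lemma mem_composant_iff {Y : Set α} {p x : α} :
    x ∈ composant Y p ↔ ∃ K, IsProperSubcontinuum Y K ∧ p ∈ K ∧ x ∈ K := by
  constructor
  · rintro ⟨K, ⟨h1, h2, h3, h4⟩, h5⟩
    exact ⟨K, ⟨h1, h2, h3⟩, h4, h5⟩
  · rintro ⟨K, ⟨h1, h2, h3⟩, h4, h5⟩
    exact ⟨K, ⟨h1, h2, h3, h4⟩, h5⟩

lemma IsComposant.subset {Y C : Set α} (hC : IsComposant Y C) : C ⊆ Y := by
  obtain ⟨p, -, rfl⟩ := hC
  intro x hx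
  obtain ⟨K, hK, -, hxK⟩ := mem_composant_iff.1 hx
  exact hK.2.1 hxK

lemma IsComposant.subset_of_inter {Y C K : Set α} (hY : IsIndecomposable Y)
    (hC : IsComposant Y C) (hK : IsProperSubcontinuum Y K) (h : (K ∩ C).Nonempty) : K ⊆ C := by
  obtain ⟨p, -, rfl⟩ := hC
  obtain ⟨x, hxK, hxC⟩ := h
  obtain ⟨L, hL, hpL, hxL⟩ := mem_composant_iff.1 hxC
  intro y hy
  exact mem_composant_iff.2 ⟨K ∪ L, hY.union_isProperSubcontinuum hK hL ⟨x, hxK, hxL⟩,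
    Or.inr hpL, Or.inl hy⟩

lemma IsComposant.exists_of_mem {Y C : Set α} (hY : IsIndecomposable Y)
    (hC : IsComposant Y C) {x y : α} (hx : x ∈ C) (hy : y ∈ C) :
    ∃ K, IsProperSubcontinuum Y K ∧ x ∈ K ∧ y ∈ K := by
  obtain ⟨p, -, rfl⟩ := hC
  obtain ⟨K, hK, hpK, hxK⟩ := mem_composant_iff.1 hx
  obtain ⟨L, hL, hpL, hyL⟩ := mem_composant_iff.1 hy
  exact ⟨K ∪ L, hY.union_isProperSubcontinuum hK hL ⟨p, hpK, hpL⟩, Or.inl hxK, Or.inr hyL⟩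

/-- Distinct composants of an indecomposable continuum are disjoint. -/
lemma IsComposant.eq_of_mem {Y C C' : Set α} (hY : IsIndecomposable Y)
    (hC : IsComposant Y C) (hC' : IsComposant Y C') {x : α} (hx : x ∈ C) (hx' : x ∈ C') :
    C = C' := by
  have key : ∀ D D' : Set α, IsComposant Y D → IsComposant Y D' → x ∈ D → x ∈ D' → D ⊆ D' := by
    intro D D' hD hD' h h' y hy
    obtain ⟨K, hK, hxK, hyK⟩ := hD.exists_of_mem hY h hy
    exact hD'.subset_of_inter hY hK ⟨x, hxK, h'⟩ hyK
  exact (key C C' hC hC' hx hx').antisymm (key C' C hC' hC hx' hx)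

variable [T2Space α]

/-- In a compact set, a point can be separated by a relatively clopen set from any closed set
disjoint from its component, as components agree with quasicomponents. -/
lemma exists_compact_split {X F : Set α} (hX : IsCompact X) (hF : IsClosed F) {c : α}
    (hc : c ∈ X) (hd : Disjoint (connectedComponentIn X c) F) :
    ∃ E ⊆ X, IsCompact E ∧ IsCompact (X \ E) ∧ c ∈ E ∧ Disjoint E F := by
  have : CompactSpace X := isCompact_iff_compactSpace.1 hX
  rw [connectedComponentIn_eq_image hc, connectedComponent_eq_iInter_isClopen] at hd
  let ι := { s : Set X // IsClopen s ∧ (⟨c, hc⟩ : X) ∈ s }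
  have : Nonempty ι := ⟨⟨univ, isClopen_univ, mem_univ _⟩⟩
  obtain ⟨⟨E, hE, hcE⟩, hEF⟩ := exists_subset_nhds_of_isCompact' (V := fun s : ι => (s : Set X))
    (U := (Subtype.val ⁻¹' F)ᶜ)
    (fun s t => ⟨⟨s.1 ∩ t.1, s.2.1.inter t.2.1, s.2.2, t.2.2⟩, inter_subset_left,
      inter_subset_right⟩)
    (fun s => s.2.1.isClosed.isCompact) (fun s => s.2.1.isClosed)
    (fun x hx => (hF.preimage continuous_subtype_val).isOpen_compl.mem_nhds
      fun hxF => hd.le_bot ⟨⟨x, hx, rfl⟩, hxF⟩)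
  have hcompl : X \ (Subtype.val '' E) = Subtype.val '' Eᶜ := by
    ext x
    constructor
    · rintro ⟨hx, hxE⟩
      exact ⟨⟨x, hx⟩, fun h => hxE ⟨_, h, rfl⟩, rfl⟩
    · rintro ⟨y, hy, rfl⟩
      refine ⟨y.2, ?_⟩
      rintro ⟨z, hz, he⟩
      exact hy (Subtype.ext he ▸ hz)
  refine ⟨Subtype.val '' E, ?_, hE.isClosed.isCompact.image continuous_subtype_val, ?_,
    ⟨_, hcE, rfl⟩, ?_⟩
  · rintro _ ⟨y, -, rfl⟩; exact y.2
  · rw [hcompl]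
    exact hE.compl.isClosed.isCompact.image continuous_subtype_val
  · rw [disjoint_left]
    rintro _ ⟨y, hy, rfl⟩ hyF
    exact hEF hy hyF

/-- If `Y \ K` splits into the relatively open parts cut out by `u` and `v`, then the union
of `K` with the first part, written as `Y \ (Kᶜ ∩ v)`, is a continuum. -/
lemma isContinuum_diff_compl_inter {K Y u v : Set α} (hK : IsContinuum K) (hY : IsContinuum Y)
    (hKY : K ⊆ Y) (hu : IsOpen u) (hv : IsOpen v) (huv : Y \ K ⊆ u ∪ v)
    (hd : (Y \ K) ∩ (u ∩ v) = ∅) : IsContinuum (Y \ (Kᶜ ∩ v)) := by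
  have hKo : IsOpen Kᶜ := hK.1.isClosed.isOpen_compl
  have hAc : IsCompact (Y \ (Kᶜ ∩ v)) := hY.1.diff (hKo.inter hv)
  have hKA : K ⊆ Y \ (Kᶜ ∩ v) := fun x hx => ⟨hKY hx, fun h => h.1 hx⟩
  refine ⟨hAc, hK.2.nonempty.mono hKA, ?_⟩
  have key : ∀ a b : Set α, IsClosed a → IsClosed b → Y \ (Kᶜ ∩ v) ⊆ a ∪ b → Disjoint a b →
      K ⊆ a → Y \ (Kᶜ ∩ v) ⊆ a := by
    intro a b ha hb hab hdab hKa
    have hcl1 : IsClosed ((Y \ (Kᶜ ∩ v)) ∩ a ∪ Y \ (Kᶜ ∩ u)) :=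
      (hAc.inter_right ha).isClosed.union (hY.1.diff (hKo.inter hu)).isClosed
    have hcl2 : IsClosed ((Y \ (Kᶜ ∩ v)) ∩ b) := (hAc.inter_right hb).isClosed
    have hb' : ∀ x ∈ (Y \ (Kᶜ ∩ v)) ∩ b, x ∉ K ∧ x ∈ u := by
      rintro x ⟨⟨hxY, hxv⟩, hxb⟩
      have hxK : x ∉ K := fun h => hdab.le_bot ⟨hKa h, hxb⟩
      exact ⟨hxK, (huv ⟨hxY, hxK⟩).resolve_right fun h => hxv ⟨hxK, h⟩⟩
    have hcov : Y ⊆ ((Y \ (Kᶜ ∩ v)) ∩ a ∪ Y \ (Kᶜ ∩ u)) ∪ (Y \ (Kᶜ ∩ v)) ∩ b := by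
      intro x hx
      by_cases hxv : x ∈ Kᶜ ∩ v
      · refine Or.inl (Or.inr ⟨hx, fun hxu => ?_⟩)
        have : x ∈ (Y \ K) ∩ (u ∩ v) := ⟨⟨hx, hxv.1⟩, hxu.2, hxv.2⟩
        rwa [hd] at this
      · rcases hab ⟨hx, hxv⟩ with h | h
        · exact Or.inl (Or.inl ⟨⟨hx, hxv⟩, h⟩)
        · exact Or.inr ⟨⟨hx, hxv⟩, h⟩
    have hdis : Disjoint ((Y \ (Kᶜ ∩ v)) ∩ a ∪ Y \ (Kᶜ ∩ u)) ((Y \ (Kᶜ ∩ v)) ∩ b) := by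
      rw [disjoint_left]
      rintro x (hx | hx) hxb
      · exact hdab.le_bot ⟨hx.2, hxb.2⟩
      · exact hx.2 (hb' x hxb)
    rcases (isPreconnected_iff_subset_of_fully_disjoint_closed hY.1.isClosed).1
      hY.2.isPreconnected _ _ hcl1 hcl2 hcov hdis with h | h
    · intro x hx
      refine (hab hx).resolve_right fun hxb => ?_
      exact hdis.le_bot ⟨h hx.1, hx, hxb⟩
    · obtain ⟨k, hk⟩ := hK.2.nonempty
      exact absurd hk (hb' k (h (hKY hk))).1
  rw [isPreconnected_iff_subset_of_fully_disjoint_closed hAc.isClosed]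
  intro a b ha hb hab hdab
  rcases (isPreconnected_iff_subset_of_fully_disjoint_closed hK.1.isClosed).1
    hK.2.isPreconnected a b ha hb (hKA.trans hab) hdab with h | h
  · exact Or.inl (key a b ha hb hab hdab h)
  · exact Or.inr (key b a hb ha (by rwa [union_comm]) hdab.symm h)

/-- A proper subcontinuum of an indecomposable continuum is nowhere dense in it. -/
lemma IsIndecomposable.subset_closure_diff {Y K : Set α} (hY : IsIndecomposable Y)
    (hK : IsContinuum K) (hKY : K ⊆ Y) (hne : K ≠ Y) : Y ⊆ closure (Y \ K) := by
  have hcY : closure (Y \ K) ⊆ Y := hY.1.1.isClosed.closure_subset_iff.2 sdiff_subset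
  have hnemp : (Y \ K).Nonempty := by
    rw [sdiff_nonempty]; exact fun h => hne (hKY.antisymm h)
  by_cases hp : IsPreconnected (Y \ K)
  · by_contra hcon
    refine hY.2 ⟨K, closure (Y \ K), hK, hKY, hne,
      ⟨hY.1.1.of_isClosed_subset isClosed_closure hcY, hnemp.closure, hp.closure⟩, hcY,
      fun h => hcon h.symm.subset, (union_subset hKY hcY).antisymm fun x hx => ?_⟩
    by_cases hxK : x ∈ K
    · exact Or.inl hxK
    · exact Or.inr (subset_closure ⟨hx, hxK⟩)
  · exfalso
    rw [isPreconnected_iff_subset_of_disjoint] at hp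
    push Not at hp
    obtain ⟨u, v, hu, hv, huv, hd, hnu, hnv⟩ := hp
    obtain ⟨a, ha, hau⟩ := not_subset.1 hnu
    obtain ⟨b, hb, hbv⟩ := not_subset.1 hnv
    have hav := (huv ha).resolve_left hau
    have hbu := (huv hb).resolve_right hbv
    refine hY.2 ⟨Y \ (Kᶜ ∩ v), Y \ (Kᶜ ∩ u),
      isContinuum_diff_compl_inter hK hY.1 hKY hu hv huv hd, sdiff_subset, fun h => ?_,
      isContinuum_diff_compl_inter hK hY.1 hKY hv hu (by rwa [union_comm])
        (by rwa [inter_comm v u]), sdiff_subset, fun h => ?_, ?_⟩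
    · have := h.symm.subset ha.1
      exact this.2 ⟨ha.2, hav⟩
    · have := h.symm.subset hb.1
      exact this.2 ⟨hb.2, hbu⟩
    · refine (union_subset sdiff_subset sdiff_subset).antisymm fun x hx => ?_
      by_cases hxv : x ∈ Kᶜ ∩ v
      · refine Or.inr ⟨hx, fun hxu => ?_⟩
        have : x ∈ (Y \ K) ∩ (u ∩ v) := ⟨⟨hx, hxv.1⟩, hxu.2, hxv.2⟩
        rwa [hd] at this
      · exact Or.inl ⟨hx, hxv⟩

/-- Every proper subcontinuum through `p` misses some nonempty basic open subset `B` of `Y`,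
so the composant of `p` is covered by the components of `p` in the sets `Y \ B`. -/
lemma exists_countable_cover_composant [SecondCountableTopology α] {Y C : Set α}
    (hY : IsCompact Y) (hC : IsComposant Y C) :
    ∃ 𝒦 : Set (Set α), 𝒦.Countable ∧ (∀ K ∈ 𝒦, IsProperSubcontinuum Y K) ∧ C ⊆ ⋃₀ 𝒦 := by
  obtain ⟨p, hp, rfl⟩ := hC
  have hb := TopologicalSpace.isBasis_countableBasis α
  refine ⟨(fun B => connectedComponentIn (Y \ B) p) ''
    {B ∈ TopologicalSpace.countableBasis α | p ∉ B ∧ (Y ∩ B).Nonempty},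
    ((TopologicalSpace.countable_countableBasis α).mono (sep_subset _ _)).image _, ?_, ?_⟩
  · rintro _ ⟨B, ⟨hB, hpB, y, hyY, hyB⟩, rfl⟩
    have hsub := connectedComponentIn_subset (Y \ B) p
    exact ⟨isContinuum_connectedComponentIn (hY.diff (hb.isOpen hB)) ⟨hp, hpB⟩,
      hsub.trans sdiff_subset, fun h => (hsub (h.symm.subset hyY)).2 hyB⟩
  · intro x hx
    obtain ⟨K, hK, hpK, hxK⟩ := mem_composant_iff.1 hx
    obtain ⟨y, hyY, hyK⟩ : (Y \ K).Nonempty := by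
      rw [sdiff_nonempty]; exact fun h => hK.2.2 (hK.2.1.antisymm h)
    obtain ⟨B, hB, hyB, hBK⟩ := hb.exists_subset_of_mem_open (show y ∈ Kᶜ from hyK)
      hK.1.1.isClosed.isOpen_compl
    refine ⟨connectedComponentIn (Y \ B) p,
      mem_image_of_mem (fun B => connectedComponentIn (Y \ B) p)
        (show B ∈ {B ∈ TopologicalSpace.countableBasis α | p ∉ B ∧ (Y ∩ B).Nonempty} from
          ⟨hB, fun h => hBK h hpK, y, hyY, hyB⟩), ?_⟩
    exact hK.1.2.isPreconnected.subset_connectedComponentIn (F := Y \ B) hpK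
      (fun z hz => ⟨hK.2.1 hz, fun h => hBK h hz⟩) hxK

/-- By the Baire category theorem, an indecomposable continuum is not covered by countably
many proper subcontinua. -/
lemma IsIndecomposable.not_subset_sUnion {Y : Set α} (hY : IsIndecomposable Y)
    {𝒦 : Set (Set α)} (hc : 𝒦.Countable) (h𝒦 : ∀ K ∈ 𝒦, IsProperSubcontinuum Y K) :
    ¬ Y ⊆ ⋃₀ 𝒦 := by
  intro hsub
  have : CompactSpace Y := isCompact_iff_compactSpace.1 hY.1.1
  have : Nonempty Y := hY.1.2.nonempty.to_subtype
  have : Countable 𝒦 := hc.to_subtype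
  obtain ⟨⟨K, hK⟩, ⟨y, hyY⟩, hy⟩ := nonempty_interior_of_iUnion_of_closed
    (f := fun K : 𝒦 => (Subtype.val ⁻¹' (K : Set α) : Set Y))
    (fun K => (h𝒦 K K.2).1.1.isClosed.preimage continuous_subtype_val)
    (eq_univ_of_forall fun y => by
      obtain ⟨K, hK, hyK⟩ := hsub y.2
      exact mem_iUnion.2 ⟨⟨K, hK⟩, hyK⟩)
  obtain ⟨t, htK, hto, hyt⟩ := mem_interior.1 hy
  obtain ⟨o, ho, rfl⟩ := isOpen_induced_iff.1 hto
  have hp := h𝒦 K hK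
  obtain ⟨z, hzo, hzY, hzK⟩ := mem_closure_iff.1
    (hY.subset_closure_diff hp.1 hp.2.1 hp.2.2 hyY) o ho hyt
  exact hzK (htK (show (⟨z, hzY⟩ : Y) ∈ Subtype.val ⁻¹' o from hzo))

/-! ### Internal composants -/

/-- A continuum `Z`, not comparable with `Y`, that meets an internal composant `C` of `Y` has
disconnected intersection with some proper subcontinuum inside every other composant of `Y`. -/
lemma exists_properSubcontinuum_inter_not_isPreconnected [CompactSpace α] {Y Z C C' : Set α}
    (hY : IsIndecomposable Y) (hC : IsInternalComposant Y C) (hC' : IsComposant Y C')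
    (hne : C' ≠ C) (hZ : IsContinuum Z) (hZC : (Z ∩ C).Nonempty) (hYZ : ¬ Y ⊆ Z)
    (hZY : ¬ Z ⊆ Y) :
    ∃ M, IsProperSubcontinuum Y M ∧ M ⊆ C' ∧ ¬ IsPreconnected (M ∩ Z) := by
  obtain ⟨c, hcZ, hcC⟩ := hZC
  have hcY : c ∈ Y := hC.1.subset hcC
  obtain ⟨x₀, hx₀Z, hx₀C'⟩ := hC.2 Z hZ ⟨c, hcZ, hcC⟩ hZY C' hC'
  have hx₀Y : x₀ ∈ Y := hC'.subset hx₀C'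
  have hZYc : IsCompact (Z ∩ Y) := hZ.1.inter hY.1.1
  -- this component is a proper subcontinuum of `Y` meeting `C`, hence contained in `C`
  have hcomp : x₀ ∉ connectedComponentIn (Z ∩ Y) c := by
    intro hx
    have hsub := connectedComponentIn_subset (Z ∩ Y) c
    have hp : IsProperSubcontinuum Y (connectedComponentIn (Z ∩ Y) c) :=
      ⟨isContinuum_connectedComponentIn hZYc ⟨hcZ, hcY⟩, hsub.trans inter_subset_right,
        fun h => hYZ (h.symm.subset.trans (hsub.trans inter_subset_left))⟩
    have := hC.1.subset_of_inter hY hp ⟨c, mem_connectedComponentIn ⟨hcZ, hcY⟩, hcC⟩ hx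
    exact hne (hC'.eq_of_mem hY hC.1 hx₀C' this)
  obtain ⟨S, hSsub, hSc, hTc, hcS, hSx₀⟩ := exists_compact_split hZYc
    (isClosed_singleton (x := x₀)) ⟨hcZ, hcY⟩ (disjoint_singleton_right.2 hcomp)
  have hx₀T : x₀ ∈ (Z ∩ Y) \ S := ⟨⟨hx₀Z, hx₀Y⟩, disjoint_singleton_right.1 hSx₀⟩
  obtain ⟨N, hNo, hSN, hNT, -⟩ := exists_open_between_and_isCompact_closure hSc
    hTc.isClosed.isOpen_compl (fun x hx hx' => hx'.2 hx)
  have hZN : IsCompact (Z ∩ closure N) := hZ.1.inter_right isClosed_closure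
  have hcN : c ∈ Z ∩ closure N := ⟨hcZ, subset_closure (hSN hcS)⟩
  -- boundary bumping: otherwise a clopen piece of `Z ∩ closure N` inside `N` would be
  -- clopen in `Z`, forcing `x₀ ∈ N`
  obtain ⟨y, hyL, hyN⟩ : ∃ y ∈ connectedComponentIn (Z ∩ closure N) c, y ∉ N := by
    by_contra hcon
    push Not at hcon
    obtain ⟨E, hEsub, hEc, hE'c, hcE, hEN⟩ := exists_compact_split hZN hNo.isClosed_compl hcN
      (disjoint_left.2 fun y hy hy' => hy' (hcon y hy))
    have hcl : IsClosed (((Z ∩ closure N) \ E) ∪ (Z ∩ Nᶜ)) :=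
      hE'c.isClosed.union (hZ.1.inter_right hNo.isClosed_compl).isClosed
    have hdis : Disjoint E (((Z ∩ closure N) \ E) ∪ (Z ∩ Nᶜ)) := by
      rw [disjoint_left]
      rintro x hx (h | h)
      · exact h.2 hx
      · exact hEN.le_bot ⟨hx, h.2⟩
    have hcov : Z ⊆ E ∪ (((Z ∩ closure N) \ E) ∪ (Z ∩ Nᶜ)) := by
      intro x hx
      by_cases hxN : x ∈ N
      · by_cases hxE : x ∈ E
        · exact Or.inl hxE
        · exact Or.inr (Or.inl ⟨⟨hx, subset_closure hxN⟩, hxE⟩)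
      · exact Or.inr (Or.inr ⟨hx, hxN⟩)
    rcases (isPreconnected_iff_subset_of_fully_disjoint_closed hZ.1.isClosed).1
      hZ.2.isPreconnected _ _ hEc.isClosed hcl hcov hdis with h | h
    · exact hNT (hEsub (h hx₀Z)).2 hx₀T
    · exact hdis.le_bot ⟨hcE, h hcZ⟩
  have hLsub := connectedComponentIn_subset (Z ∩ closure N) c
  have hyY : y ∉ Y := by
    intro hyY
    have hy := hLsub hyL
    by_cases hyS : y ∈ S
    · exact hyN (hSN hyS)
    · exact hNT hy.2 ⟨⟨hy.1, hyY⟩, hyS⟩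
  obtain ⟨x₁, hx₁L, hx₁C'⟩ := hC.2 _ (isContinuum_connectedComponentIn hZN hcN)
    ⟨c, mem_connectedComponentIn hcN, hcC⟩ (fun h => hyY (h hyL)) C' hC'
  have hx₁S : x₁ ∈ S := by
    by_contra h
    exact hNT (hLsub hx₁L).2 ⟨⟨(hLsub hx₁L).1, hC'.subset hx₁C'⟩, h⟩
  obtain ⟨M, hM, hx₀M, hx₁M⟩ := hC'.exists_of_mem hY hx₀C' hx₁C'
  refine ⟨M, hM, hC'.subset_of_inter hY hM ⟨x₀, hx₀M, hx₀C'⟩, fun hpre => ?_⟩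
  obtain ⟨x, -, hxS, hxT⟩ := isPreconnected_closed_iff.1 hpre S ((Z ∩ Y) \ S) hSc.isClosed
    hTc.isClosed (fun x hx => by
      by_cases hxS : x ∈ S
      · exact Or.inl hxS
      · exact Or.inr ⟨⟨hx.2, hM.2.1 hx.1⟩, hxS⟩)
    ⟨x₁, ⟨hx₁M, (hSsub hx₁S).1⟩, hx₁S⟩ ⟨x₀, ⟨hx₀M, hx₀Z⟩, hx₀T⟩
  exact hxT.2 hxS

end Continua

/-! ### Complementary domains in the sphere -/

instance locallyConnectedSpace_S2 : LocallyConnectedSpace S2 := by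
  have : Fact (Module.finrank ℝ (EuclideanSpace ℝ (Fin 3)) = 2 + 1) := ⟨by simp⟩
  exact ChartedSpace.locallyConnectedSpace (EuclideanSpace ℝ (Fin 2)) S2

/-- If `M ∩ Z` is disconnected then `M ∪ Z` separates the sphere, so it has a complementary
component `W` other than the one containing `Xᶜ`; the last clause is the maximality of `W`. -/
lemma exists_complementary_domain {X M Z : Set S2}
    (hXns : ¬ Separates X) (hXne : Xᶜ.Nonempty) (hM : IsContinuum M) (hMX : M ⊆ X)
    (hZ : IsContinuum Z) (hZX : Z ⊆ X) (hMZ : ¬ IsPreconnected (M ∩ Z)) :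
    ∃ W : Set S2, IsOpen W ∧ W.Nonempty ∧ IsPreconnected W ∧ W ⊆ (M ∪ Z)ᶜ ∧
      Disjoint W (closure Xᶜ) ∧
      ∀ V, IsPreconnected V → V ⊆ (M ∪ Z)ᶜ → (V ∩ W).Nonempty → V ⊆ W := by
  obtain ⟨x, hx⟩ := hXne
  have hMZX : M ∪ Z ⊆ X := union_subset hMX hZX
  have hXc : Xᶜ ⊆ (M ∪ Z)ᶜ := compl_subset_compl.2 hMZX
  have hop : IsOpen (M ∪ Z)ᶜ := (hM.1.union hZ.1).isClosed.isOpen_compl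
  have hsep : ¬ IsPreconnected (M ∪ Z)ᶜ := fun h =>
    hMZ (isPreconnected_inter_of_not_separates_union hM hZ
      (fun h => hx (hMZX (h ▸ mem_univ x))) (not_not.2 h))
  obtain ⟨w, hw, hwx⟩ : ∃ w ∈ (M ∪ Z)ᶜ, w ∉ connectedComponentIn (M ∪ Z)ᶜ x := by
    by_contra hcon
    push Not at hcon
    refine hsep ?_
    rw [← (connectedComponentIn_subset (M ∪ Z)ᶜ x).antisymm hcon]
    exact isPreconnected_connectedComponentIn
  have hWo : IsOpen (connectedComponentIn (M ∪ Z)ᶜ w) := hop.connectedComponentIn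
  refine ⟨connectedComponentIn (M ∪ Z)ᶜ w, hWo, ⟨w, mem_connectedComponentIn hw⟩,
    isPreconnected_connectedComponentIn, connectedComponentIn_subset _ _, ?_, ?_⟩
  · refine Disjoint.closure_right (disjoint_left.2 fun y hyW hyX => hwx ?_) hWo
    have hy := (not_not.1 hXns).subset_connectedComponentIn hx hXc hyX
    rw [connectedComponentIn_eq hy, ← connectedComponentIn_eq hyW]
    exact mem_connectedComponentIn hw
  · rintro V hV hVs ⟨v, hvV, hvW⟩
    rw [connectedComponentIn_eq hvW]
    exact hV.subset_connectedComponentIn hvV hVs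

/-- Let `X ⊆ S²` be a nonseparating continuum and `Y` an indecomposable continuum
contained in the boundary of `X`. If `Z` is a subcontinuum of `X` intersecting an
internal composant of `Y` and `Z` does not separate `S²`, then `Y ⊆ Z` or `Z ⊆ Y`. -/
theorem nonseparating_subcontinuum_meeting_internal_composant
    (X Y Z : Set S2) (hX : IsContinuum X) (hXns : ¬ Separates X)
    (hY : IsIndecomposable Y) (hYX : Y ⊆ frontier X)
    (hZ : IsContinuum Z) (hZX : Z ⊆ X) (hZns : ¬ Separates Z)
    (C : Set S2) (hC : IsInternalComposant Y C) (hZC : (Z ∩ C).Nonempty) :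
    Y ⊆ Z ∨ Z ⊆ Y := by
  by_contra hcon
  obtain ⟨hYZ, hZY⟩ := not_or.1 hcon
  have hXcl : IsClosed X := hX.1.isClosed
  have hYsubX : Y ⊆ X := hYX.trans hXcl.frontier_subset
  have hYcl : Y ⊆ closure Xᶜ := by
    rw [← frontier_compl] at hYX
    exact hYX.trans frontier_subset_closure
  have hXne : Xᶜ.Nonempty := by
    obtain ⟨y, hy⟩ := hY.1.2.nonempty
    exact closure_nonempty_iff.1 ⟨y, hYcl hy⟩
  let ι := {C' : Set S2 // IsComposant Y C' ∧ C' ≠ C}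
  choose M hM hMC hMZ using fun i : ι =>
    exists_properSubcontinuum_inter_not_isPreconnected hY hC i.2.1 i.2.2 hZ hZC hYZ hZY
  choose W hWo hWne hWp hWsub hWX hWmax using fun i : ι =>
    exists_complementary_domain hXns hXne (hM i).1 ((hM i).2.1.trans hYsubX) hZ hZX (hMZ i)
  have hWM : ∀ i j : ι, W i ⊆ (M j ∪ Z)ᶜ := by
    rintro i j x hx (h | h)
    · exact (hWX i).le_bot ⟨hx, hYcl ((hM j).2.1 h)⟩
    · exact hWsub i hx (Or.inr h)
  -- if two domains meet, they coincide and their boundary lies in `Z`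
  have hdisj : Pairwise (Function.onFun Disjoint W) := by
    intro i j hij
    by_contra hnd
    obtain ⟨x, hxi, hxj⟩ := not_disjoint_iff.1 hnd
    have hle : W i ⊆ W j := hWmax j (W i) (hWp i) (hWM i j) ⟨x, hxi, hxj⟩
    have hge : W j ⊆ W i := hWmax i (W j) (hWp j) (hWM j i) ⟨x, hxj, hxi⟩
    have heq : W i = W j := hle.antisymm hge
    have hbd : ∀ k : ι, W k = W i → closure (W i) ∩ (M k)ᶜ ∩ Zᶜ ⊆ W i := by
      rintro k hk y ⟨⟨hyc, hyM⟩, hyZ⟩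
      rw [← hk] at hyc ⊢
      have hop : IsOpen (M k ∪ Z)ᶜ := ((hM k).1.1.union hZ.1).isClosed.isOpen_compl
      have hy : y ∈ (M k ∪ Z)ᶜ := fun h => h.elim hyM hyZ
      obtain ⟨z, hz, hzW⟩ := mem_closure_iff.1 hyc _
        (hop.connectedComponentIn (x := y)) (mem_connectedComponentIn hy)
      exact hWmax k _ isPreconnected_connectedComponentIn (connectedComponentIn_subset _ _)
        ⟨z, hz, hzW⟩ (mem_connectedComponentIn hy)
    have hZW : Zᶜ ⊆ W i := by
      refine (not_not.1 hZns).subset_of_closure_inter_subset (hWo i) ?_ ?_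
      · exact ⟨x, fun h => hWsub i hxi (Or.inr h), hxi⟩
      · rintro y ⟨hyc, hyZ⟩
        by_cases hyi : y ∈ M i
        · have hyj : y ∉ M j := fun h => hij (Subtype.ext
            (i.2.1.eq_of_mem hY j.2.1 (hMC i hyi) (hMC j h)))
          exact hbd j heq.symm ⟨⟨hyc, hyj⟩, hyZ⟩
        · exact hbd i rfl ⟨⟨hyc, hyi⟩, hyZ⟩
    obtain ⟨u, hu⟩ := hXne
    exact (hWX i).le_bot ⟨hZW (fun h => hu (hZX h)), subset_closure hu⟩
  have : Countable ι := hdisj.countable_of_isOpen_disjoint hWo hWne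
  choose 𝒦 h𝒦c h𝒦p h𝒦s using fun C' : {C' : Set S2 // IsComposant Y C'} =>
    exists_countable_cover_composant hY.1.1 C'.2
  refine hY.not_subset_sUnion (𝒦 := 𝒦 ⟨C, hC.1⟩ ∪ ⋃ i : ι, 𝒦 ⟨i.1, i.2.1⟩)
    ((h𝒦c _).union (countable_iUnion fun i => h𝒦c _)) ?_ ?_
  · rintro K (hK | hK)
    · exact h𝒦p _ K hK
    · obtain ⟨i, hi⟩ := mem_iUnion.1 hK
      exact h𝒦p _ K hi
  · intro y hy
    -- `Y` is not a point, as it would then lie in `Z`; so `{y}` is a proper subcontinuum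
    have hyc : y ∈ composant Y y := by
      refine mem_composant_iff.2 ⟨{y}, ⟨⟨isCompact_singleton, isConnected_singleton⟩,
        singleton_subset_iff.2 hy, fun h => ?_⟩, rfl, rfl⟩
      obtain ⟨c, hcZ, hcC⟩ := hZC
      have hcY := hC.1.subset hcC
      have hcy : c = y := by rwa [← h, mem_singleton_iff] at hcY
      refine hYZ ?_
      rw [← h, singleton_subset_iff, ← hcy]
      exact hcZ
    have hcomp : IsComposant Y (composant Y y) := ⟨y, hy, rfl⟩
    by_cases he : composant Y y = C
    · obtain ⟨K, hK, hyK⟩ := h𝒦s ⟨C, hC.1⟩ (he ▸ hyc)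
      exact ⟨K, Or.inl hK, hyK⟩
    · obtain ⟨K, hK, hyK⟩ := h𝒦s ⟨composant Y y, hcomp⟩ hyc
      exact ⟨K, Or.inr (mem_iUnion.2 ⟨⟨composant Y y, hcomp, he⟩, hK⟩), hyK⟩
end

section
/- If A is a continuum and S ⊆ A is a nonempty compact subset, then for every connected component B of A \ S, the closure of B intersects S (equivalently, the boundary of B in A intersects S). -/
/-!
Boundary bumping. If the closure of the component `B` of `x` missed `S`, normality would give an
open `U ⊇ closure B` with `closure U` disjoint from `S`. In the compact space
`K = A ∩ closure U` the component of `x` lies in `B ⊆ U`, and it is the intersection of the clopen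
sets containing `x` (components and quasi-components agree in compact Hausdorff spaces), so by
compactness some clopen `Z ⊆ K` satisfies `x ∈ Z ⊆ U`. Such a `Z` is also clopen in `A`:
it is closed since `K` is, and open since it stays inside the open set `U`. It is nonempty and
misses `S`, contradicting the connectedness of `A`.
-/

open Set Metric Topology Filter

/-- In a compact Hausdorff space, every open set containing a connected component contains a
clopen neighbourhood of it. -/
lemma exists_isClopen_of_connectedComponent_subset {Y : Type*} [TopologicalSpace Y] [T2Space Y]
    [CompactSpace Y] {y : Y} {W : Set Y} (hW : IsOpen W) (h : connectedComponent y ⊆ W) :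
    ∃ Z : Set Y, IsClopen Z ∧ y ∈ Z ∧ Z ⊆ W := by
  rw [connectedComponent_eq_iInter_isClopen] at h
  have : Nonempty { s : Set Y // IsClopen s ∧ y ∈ s } := ⟨⟨univ, isClopen_univ, mem_univ y⟩⟩
  obtain ⟨⟨Z, hZ, hy⟩, hZW⟩ := exists_subset_nhds_of_compactSpace
    (V := fun s : { s : Set Y // IsClopen s ∧ y ∈ s } => (s : Set Y))
    (fun s t => ⟨⟨s.1 ∩ t.1, s.2.1.inter t.2.1, s.2.2, t.2.2⟩,
      inter_subset_left, inter_subset_right⟩)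
    (fun s => s.2.1.isClosed) (fun z hz => hW.mem_nhds (h hz))
  exact ⟨Z, hZ, hy, hZW⟩

/-- If `A` is a continuum and `S ⊆ A` is a nonempty compact subset, then the
closure of every connected component of `A \ S` intersects `S`. -/
theorem closure_of_component_meets_compact
    {X : Type*} [MetricSpace X] (A S : Set X)
    (hA : IsContinuum A) (hS : S.Nonempty) (hScpt : IsCompact S) (hSA : S ⊆ A)
    (B : Set X) (hB : ∃ x ∈ A \ S, B = connectedComponentIn (A \ S) x) :
    (closure B ∩ S).Nonempty := by
  obtain ⟨x, hx, rfl⟩ := hB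
  set B := connectedComponentIn (A \ S) x
  by_contra hne
  rw [not_nonempty_iff_eq_empty, ← disjoint_iff_inter_eq_empty] at hne
  obtain ⟨U, hU, hBU, hUS⟩ := normal_exists_closure_subset (isClosed_closure (s := B))
    hScpt.isClosed.isOpen_compl (subset_compl_iff_disjoint_right.2 hne)
  have hxB : x ∈ B := mem_connectedComponentIn hx
  have hKc : IsCompact (A ∩ closure U) := hA.1.inter_right isClosed_closure
  have : CompactSpace ↥(A ∩ closure U) := isCompact_iff_compactSpace.1 hKc
  have hxK : x ∈ A ∩ closure U := ⟨hx.1, subset_closure (hBU (subset_closure hxB))⟩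
  have hcomp : connectedComponent (⟨x, hxK⟩ : ↥(A ∩ closure U)) ⊆ Subtype.val ⁻¹' U := by
    rw [← image_subset_iff, ← connectedComponentIn_eq_image hxK]
    have hsub : A ∩ closure U ⊆ A \ S := fun y hy => ⟨hy.1, hUS hy.2⟩
    exact (connectedComponentIn_mono x hsub).trans (subset_closure.trans hBU)
  obtain ⟨Z, hZ, hxZ, hZU⟩ :=
    exists_isClopen_of_connectedComponent_subset (hU.preimage continuous_subtype_val) hcomp
  obtain ⟨O, hO, rfl⟩ := isOpen_induced_iff.1 hZ.isOpen
  -- `A ∩ closure U ∩ O` is the clopen set viewed in the ambient space; by `hZU` it equals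
  -- `A ∩ (O ∩ U)`, hence is open in `A` as well.
  have hclosed : IsClosed (A ∩ closure U ∩ O) := by
    rw [← Subtype.image_preimage_coe]
    exact hKc.isClosed.isClosedMap_subtype_val _ hZ.isClosed
  obtain ⟨s, hs⟩ := hS
  obtain ⟨y, hyA, hyOU, hy⟩ := hA.2.isPreconnected (O ∩ U) (A ∩ closure U ∩ O)ᶜ
    (hO.inter hU) hclosed.isOpen_compl
    (fun a _ => by
      by_cases ha : a ∈ A ∩ closure U ∩ O
      · exact Or.inl ⟨ha.2, hZU (a := ⟨a, ha.1⟩) ha.2⟩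
      · exact Or.inr ha)
    ⟨x, hx.1, hxZ, hBU (subset_closure hxB)⟩
    ⟨s, hSA hs, fun h => hUS h.1.2 hs⟩
  exact hy ⟨⟨hyA, subset_closure hyOU.2⟩, hyOU.1⟩
end

section
/- Let X ⊂ S² be a nonseparating continuum, and let Y be an indecomposable continuum contained in the boundary of X. If Z is a nonseparating subcontinuum of X intersecting an internal composant C of Y, then C ∩ Z is connected. -/
/-!
Suppose `C ∩ Z` is disconnected. Two points of different pieces lie in a common proper
subcontinuum `K ⊆ C` of `Y`, and then `K ∩ Z` is disconnected. By Janiszewski's theorem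
(`janiszewski`) `K ∪ Z` separates the sphere. As `Xᶜ` is connected, some nonempty open piece `U`
of the complement of `K ∪ Z` lies in `X`, hence in its interior, and so misses `Y ⊆ frontier X`.
As `Z` does not separate, the boundary of `U` is not contained in `Z`. Near a boundary point
outside `Z` there is a continuum `L ⊆ closure U` that meets both `U` and its boundary and avoids `Z`
(`exists_continuum_near`). Then `L` meets `Y` only in points of `K`, so it misses every composant
of `Y` other than `C`; another composant exists by the Baire category theorem
(`exists_notMem_composant`). This contradicts `C` being internal.

Janiszewski's theorem is proved by continuous logarithms, after Eilenberg. Project the sphere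
stereographically from a point off `A ∪ B`. If `A ∪ B` does not separate, each `z - c` with `c`
off `A ∪ B` has a continuous logarithm there: the set of such `c` is clopen in the complement and
contains all large `c`. It follows that every nowhere zero continuous function on `A ∪ B` has one
(`hasLog_of_logTranslates`), by cutting the plane into small rectangles and gluing across lines
(`HasLog.glue_re`). A splitting of `A ∩ B` into two closed pieces would yield a function without a
logarithm (`isPreconnected_inter_of_logTranslates`).
-/

open Set Metric Topology Filter

/-! ### Continuous logarithms on plane sets -/

/-- `f` has a continuous logarithm on `F`. -/
def HasLog (F : Set ℂ) (f : ℂ → ℂ) : Prop :=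
  ∃ g : ℂ → ℂ, ContinuousOn g F ∧ ∀ z ∈ F, f z = Complex.exp (g z)

/-- For every point `c` off `F`, the function `z ↦ z - c` has a continuous logarithm on `F`.
For compact `F` this is the analytic form of "`F` does not separate the plane". -/
def LogTranslates (F : Set ℂ) : Prop := ∀ c ∉ F, HasLog F (fun z => z - c)

lemma HasLog.mono {F E : Set ℂ} {f : ℂ → ℂ} (h : HasLog F f) (hE : E ⊆ F) : HasLog E f := by
  obtain ⟨g, hg, hf⟩ := h
  exact ⟨g, hg.mono hE, fun z hz => hf z (hE hz)⟩

lemma HasLog.comp {F E : Set ℂ} {f φ : ℂ → ℂ} (h : HasLog F f) (hφ : ContinuousOn φ E)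
    (hE : MapsTo φ E F) : HasLog E (fun z => f (φ z)) := by
  obtain ⟨g, hg, hf⟩ := h
  exact ⟨fun z => g (φ z), hg.comp hφ hE, fun z hz => hf _ (hE hz)⟩

lemma eq_zero_of_exp_eq_one {w : ℂ} (h : Complex.exp w = 1) (hw : ‖w‖ < 1) : w = 0 := by
  obtain ⟨n, rfl⟩ := Complex.exp_eq_one_iff.1 h
  by_cases hn : n = 0
  · simp [hn]
  exfalso
  have h1 : (1 : ℝ) ≤ |(n : ℝ)| := by exact_mod_cast Int.one_le_abs hn
  have h2 : ‖(n : ℂ) * (2 * Real.pi * Complex.I)‖ = |(n : ℝ)| * (2 * Real.pi) := by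
    simp [abs_of_pos Real.pi_pos]
  rw [h2] at hw
  nlinarith [Real.pi_gt_three]

lemma eq_of_exp_eq_one {a b : ℂ} (ha : Complex.exp a = 1) (hb : Complex.exp b = 1)
    (h : dist a b < 1) : a = b := by
  rw [dist_eq_norm] at h
  exact sub_eq_zero.1 (eq_zero_of_exp_eq_one (by rw [Complex.exp_sub, ha, hb, div_one]) h)

lemma const_of_exp_eq_one {A : Set ℂ} (hA : IsPreconnected A) {h : ℂ → ℂ}
    (hc : ContinuousOn h A) (h1 : ∀ z ∈ A, Complex.exp (h z) = 1) {x y : ℂ}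
    (hx : x ∈ A) (hy : y ∈ A) : h x = h y := by
  have hd : DiscreteTopology {w : ℂ | Complex.exp w = 1} := by
    refine DiscreteTopology.of_forall_le_dist one_pos ?_
    rintro ⟨a, ha⟩ ⟨b, hb⟩ hab
    by_contra hlt
    exact hab (Subtype.ext (eq_of_exp_eq_one ha hb (not_le.1 hlt)))
  exact hA.constant_of_mapsTo (T := {w : ℂ | Complex.exp w = 1}) ⟨hd⟩ hc h1 hx hy

/-- A continuous function with values in `2πiℤ` on a compact subset `T` of the line is a
combination of constants and of jumps located off `T`. -/
lemma mem_of_steps (G : AddSubgroup (ℝ → ℂ)) {T : Set ℝ} (hT : IsCompact T)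
    (hcongr : ∀ n m : ℝ → ℂ, EqOn n m T → n ∈ G → m ∈ G)
    (hconst : ∀ w : ℂ, Complex.exp w = 1 → (fun _ : ℝ => w) ∈ G)
    (hstep : ∀ c ∉ T, (fun t : ℝ => if c < t then 2 * (Real.pi : ℂ) * Complex.I else 0) ∈ G)
    {n : ℝ → ℂ} (hn : ContinuousOn n T) (h1 : ∀ t ∈ T, Complex.exp (n t) = 1) : n ∈ G := by
  obtain ⟨δ, hδ, hu⟩ := Metric.uniformContinuousOn_iff.1
    (hT.uniformContinuousOn_of_continuous hn) 1 one_pos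
  have hloc : ∀ x ∈ T, ∀ x' ∈ T, dist x x' < δ → n x = n x' := fun x hx x' hx' hd =>
    eq_of_exp_eq_one (h1 x hx) (h1 x' hx') (hu x hx x' hx' hd)
  have hQloc : ∀ x ∈ T, ∀ x' ∈ T, dist x x' < δ →
      (fun y => n (min y x)) ∈ G → (fun y => n (min y x')) ∈ G := by
    intro x hx x' hx' hd
    refine hcongr _ _ fun y hy => ?_
    have h0 := hloc x hx x' hx' hd
    rw [Real.dist_eq, abs_lt] at hd
    show n (min y x) = n (min y x')
    rcases le_total y x with h | h <;> rcases le_total y x' with h' | h'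
    · simp [h, h']
    · rw [min_eq_left h, min_eq_right h']
      exact hloc y hy x' hx' (by rw [Real.dist_eq, abs_lt]; constructor <;> linarith)
    · rw [min_eq_right h, min_eq_left h']
      exact hloc x hx y hy (by rw [Real.dist_eq, abs_lt]; constructor <;> linarith)
    · rw [min_eq_right h, min_eq_right h', h0]
  have key : ∀ x ∈ T, (fun y => n (min y x)) ∈ G := by
    by_contra! hcon
    obtain ⟨x₀, hx₀⟩ := hcon
    set B : Set ℝ := {x | x ∈ T ∧ (fun y => n (min y x)) ∉ G} with hB
    have hBT : B ⊆ T := fun x hx => hx.1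
    have hBne : B.Nonempty := ⟨x₀, hx₀⟩
    have hBb : BddBelow B := hT.bddBelow.mono hBT
    -- the first point `s` of `T` at which truncation fails to lie in `G`
    set s := sInf B with hs
    have hsT : s ∈ T := hT.isClosed.closure_subset_iff.2 hBT (csInf_mem_closure hBne hBb)
    have hsB : s ∈ B := by
      obtain ⟨b, hb, hbs⟩ := exists_lt_of_csInf_lt hBne (show sInf B < s + δ by linarith)
      refine ⟨hsT, fun h => hb.2 (hQloc s hsT b hb.1 ?_ h)⟩
      have := csInf_le hBb hb
      rw [Real.dist_eq, abs_lt]; constructor <;> linarith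
    have hmin : ∀ x ∈ T, x < s → (fun y => n (min y x)) ∈ G := by
      intro x hx hxs
      by_contra h
      exact absurd (csInf_le hBb (show x ∈ B from ⟨hx, h⟩)) (not_le.2 hxs)
    set A : Set ℝ := {x | x ∈ T ∧ x < s} with hA
    have hAT : A ⊆ T := fun x hx => hx.1
    rcases A.eq_empty_or_nonempty with hAe | hAne
    · refine hsB.2 (hcongr (fun _ => n s) _ (fun y hy => ?_) (hconst _ (h1 s hsT)))
      have : s ≤ y := by
        by_contra h
        exact (hAe ▸ (show y ∈ A from ⟨hy, not_le.1 h⟩) : y ∈ (∅ : Set ℝ))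
      simp [this]
    · have hAb : BddAbove A := hT.bddAbove.mono hAT
      -- its predecessor `r` in `T`
      set r := sSup A with hr
      have hrT : r ∈ T := hT.isClosed.closure_subset_iff.2 hAT (csSup_mem_closure hAne hAb)
      have hrs : r < s := by
        obtain ⟨a, ha, hra⟩ := exists_lt_of_lt_csSup hAne (show r - δ < sSup A by linarith)
        have har := le_csSup hAb ha
        have hle : r ≤ s := csSup_le hAne fun x hx => hx.2.le
        refine lt_of_le_of_ne hle fun he => hsB.2 (hQloc a ha.1 s hsT ?_ (hmin a ha.1 ha.2))
        have := ha.2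
        rw [Real.dist_eq, abs_lt]; constructor <;> linarith
      have hgap : ∀ y ∈ T, y ≤ r ∨ s ≤ y := by
        intro y hy
        by_contra! h
        exact absurd (le_csSup hAb (show y ∈ A from ⟨hy, h.2⟩)) (not_le.2 h.1)
      have hc : (r + s) / 2 ∉ T := fun h => by
        rcases hgap _ h with h | h <;> linarith
      obtain ⟨k, hk⟩ := Complex.exp_eq_one_iff.1
        (show Complex.exp (n s - n r) = 1 by rw [Complex.exp_sub, h1 s hsT, h1 r hrT, div_one])
      refine hsB.2 (hcongr _ _ (fun y hy => ?_)
        (G.add_mem (hmin r hrT hrs) (G.zsmul_mem (hstep _ hc) k)))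
      rcases hgap y hy with h | h
      · have h2 : ¬ (r + s) / 2 < y := by linarith
        simp [h, h.trans hrs.le, h2]
      · have h2 : (r + s) / 2 < y := by linarith
        show n (min y r) + k • (if (r + s) / 2 < y then 2 * (Real.pi : ℂ) * Complex.I else 0)
          = n (min y s)
        rw [if_pos h2, min_eq_right h, min_eq_right (hrs.le.trans h), zsmul_eq_mul, ← hk]
        ring
  rcases T.eq_empty_or_nonempty with rfl | hne
  · exact hcongr 0 n (by simp) G.zero_mem
  · obtain ⟨x, hx, hmax⟩ := hT.exists_isGreatest hne
    exact hcongr _ _ (fun y hy => by simp [hmax hy]) (key x hx)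

/-! ### Gluing logarithms -/

/-- A slit on one side gives a logarithm of `z - c`. -/
lemma hasLog_sub_of_slit {S : Set ℂ} {c w : ℂ} (hw : w ≠ 0)
    (h : ∀ z ∈ S, w * (z - c) ∈ Complex.slitPlane) : HasLog S (fun z => z - c) := by
  refine ⟨fun z => Complex.log (w * (z - c)) - Complex.log w, ?_, fun z hz => ?_⟩
  · exact (ContinuousOn.clog (by fun_prop) h).sub continuousOn_const
  · have h0 := Complex.slitPlane_ne_zero (h z hz)
    rw [Complex.exp_sub, Complex.exp_log h0, Complex.exp_log hw]
    field_simp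

lemma LogTranslates.inter_rect {F : Set ℂ} (h : LogTranslates F) (p q r s : ℝ) :
    LogTranslates (F ∩ (Icc p q ×ℂ Icc r s)) := by
  intro c hc
  by_cases hcF : c ∈ F
  · have hc' : c.re < p ∨ q < c.re ∨ c.im < r ∨ s < c.im := by
      by_contra! hcon
      exact hc ⟨hcF, by simp [Complex.mem_reProdIm, hcon]⟩
    rcases hc' with h | h | h | h
    · refine hasLog_sub_of_slit (w := 1) one_ne_zero fun z hz => Or.inl ?_
      have := hz.2.1.1; simp; linarith
    · refine hasLog_sub_of_slit (w := -1) (by simp) fun z hz => Or.inl ?_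
      have := hz.2.1.2; simp; linarith
    · refine hasLog_sub_of_slit (w := -Complex.I) (by simp) fun z hz => Or.inl ?_
      have := hz.2.2.1; simp; linarith
    · refine hasLog_sub_of_slit (w := Complex.I) (by simp) fun z hz => Or.inl ?_
      have := hz.2.2.2; simp; linarith
  · exact (h c hcF).mono inter_subset_left

/-- Logarithms on the two sides of a vertical line can be corrected so as to match: their
discrepancy on the line is a combination of jumps at points `c` off `F`, and each jump is
the discrepancy between half-plane branches of `log (z - c)`, which also has a logarithm
on all of `F`. -/
lemma HasLog.glue_re {F : Set ℂ} (hF : IsCompact F) (hH : LogTranslates F) (a : ℝ) {f : ℂ → ℂ}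
    (hL : HasLog (F ∩ {z | z.re ≤ a}) f) (hR : HasLog (F ∩ {z | a ≤ z.re}) f) :
    HasLog F f := by
  set FL := F ∩ {z : ℂ | z.re ≤ a} with hFL
  set FR := F ∩ {z : ℂ | a ≤ z.re} with hFR
  obtain ⟨g₁, hg₁, hf₁⟩ := hL
  obtain ⟨g₂, hg₂, hf₂⟩ := hR
  set p : ℝ → ℂ := fun t => ⟨a, t⟩ with hp
  have hpc : Continuous p := by
    have : p = fun t : ℝ => (a : ℂ) + t * Complex.I := by
      funext t; apply Complex.ext <;> simp [hp]
    rw [this]; fun_prop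
  set T : Set ℝ := Complex.im '' (F ∩ {z | z.re = a}) with hTdef
  have hT : IsCompact T :=
    (hF.inter_right (isClosed_eq Complex.continuous_re continuous_const)).image
      Complex.continuous_im
  have hTm : ∀ t, t ∈ T ↔ p t ∈ F := by
    intro t
    constructor
    · rintro ⟨z, ⟨hz, hza⟩, rfl⟩
      have : p z.im = z := Complex.ext hza.symm rfl
      rwa [this]
    · intro h
      exact ⟨p t, ⟨h, rfl⟩, rfl⟩
  have hTL : ∀ t ∈ T, p t ∈ FL := fun t ht => ⟨(hTm t).1 ht, le_refl a⟩
  have hTR : ∀ t ∈ T, p t ∈ FR := fun t ht => ⟨(hTm t).1 ht, le_refl a⟩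
  let G : AddSubgroup (ℝ → ℂ) :=
    { carrier := {n | ∃ m₁ m₂ : ℂ → ℂ, ContinuousOn m₁ FL ∧ ContinuousOn m₂ FR ∧
        (∀ z ∈ FL, Complex.exp (m₁ z) = 1) ∧ (∀ z ∈ FR, Complex.exp (m₂ z) = 1) ∧
        ∀ t ∈ T, n t = m₁ (p t) - m₂ (p t)}
      zero_mem' := ⟨fun _ => 0, fun _ => 0, continuousOn_const, continuousOn_const,
        by simp, by simp, by simp⟩
      add_mem' := by
        rintro n n' ⟨m₁, m₂, c₁, c₂, e₁, e₂, h⟩ ⟨m₁', m₂', c₁', c₂', e₁', e₂', h'⟩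
        refine ⟨fun z => m₁ z + m₁' z, fun z => m₂ z + m₂' z, c₁.add c₁', c₂.add c₂',
          fun z hz => ?_, fun z hz => ?_, fun t ht => ?_⟩
        · rw [Complex.exp_add, e₁ z hz, e₁' z hz, one_mul]
        · rw [Complex.exp_add, e₂ z hz, e₂' z hz, one_mul]
        · rw [Pi.add_apply, h t ht, h' t ht]; ring
      neg_mem' := by
        rintro n ⟨m₁, m₂, c₁, c₂, e₁, e₂, h⟩
        refine ⟨fun z => -m₁ z, fun z => -m₂ z, c₁.neg, c₂.neg,
          fun z hz => ?_, fun z hz => ?_, fun t ht => ?_⟩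
        · rw [Complex.exp_neg, e₁ z hz, inv_one]
        · rw [Complex.exp_neg, e₂ z hz, inv_one]
        · rw [Pi.neg_apply, h t ht]; ring }
  have hn : (fun t => g₁ (p t) - g₂ (p t)) ∈ G := by
    refine mem_of_steps G hT ?_ ?_ ?_ ?_ ?_
    · rintro n n' he ⟨m₁, m₂, c₁, c₂, e₁, e₂, h⟩
      exact ⟨m₁, m₂, c₁, c₂, e₁, e₂, fun t ht => by rw [← he ht, h t ht]⟩
    · intro w hw
      exact ⟨fun _ => w, fun _ => 0, continuousOn_const, continuousOn_const,
        fun _ _ => hw, by simp, by simp⟩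
    · intro c hc
      have hcF : p c ∉ F := fun h => hc ((hTm c).2 h)
      obtain ⟨L, hLc, hLe⟩ := hH (p c) hcF
      have hne : ∀ z ∈ F, z - p c ≠ 0 := fun z hz h => hcF (sub_eq_zero.1 h ▸ hz)
      have hsl : ∀ z ∈ FL, -(z - p c) ∈ Complex.slitPlane := by
        intro z hz
        have h1 : z.re ≤ a := hz.2
        rcases h1.lt_or_eq with h | h
        · left; simp [hp, h]
        · right
          intro h2
          exact hne z hz.1 (Complex.ext (by simp [hp, h]) (neg_eq_zero.1 h2))
      have hsr : ∀ z ∈ FR, z - p c ∈ Complex.slitPlane := by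
        intro z hz
        have h1 : a ≤ z.re := hz.2
        rcases h1.lt_or_eq with h | h
        · left; simp [hp, h]
        · right
          intro h2
          exact hne z hz.1 (Complex.ext (by simp [hp, h]) (by simpa using h2))
      refine ⟨fun z => L z - (Complex.log (-(z - p c)) - Real.pi * Complex.I),
        fun z => L z - Complex.log (z - p c), ?_, ?_, ?_, ?_, ?_⟩
      · exact (hLc.mono inter_subset_left).sub
          ((ContinuousOn.clog (by fun_prop) hsl).sub continuousOn_const)
      · exact (hLc.mono inter_subset_left).sub (ContinuousOn.clog (by fun_prop) hsr)
      · intro z hz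
        have h0 := hne z hz.1
        rw [Complex.exp_sub, Complex.exp_sub, ← hLe z hz.1,
          Complex.exp_log (Complex.slitPlane_ne_zero (hsl z hz)), Complex.exp_pi_mul_I]
        field_simp
      · intro z hz
        have h0 := hne z hz.1
        rw [Complex.exp_sub, ← hLe z hz.1, Complex.exp_log h0, div_self h0]
      · intro t ht
        have htc : t ≠ c := fun h => hc (h ▸ ht)
        have hI0 : Complex.I ≠ 0 := Complex.I_ne_zero
        rcases lt_or_gt_of_ne htc with h | h
        · have e1 : p t - p c = ((c - t : ℝ) : ℂ) * (-Complex.I) := by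
            apply Complex.ext <;> simp [hp]
          have e2 : -(p t - p c) = ((c - t : ℝ) : ℂ) * Complex.I := by rw [e1]; ring
          simp only [not_lt.2 h.le, if_false]
          rw [e2, e1, Complex.log_ofReal_mul (by linarith) hI0,
            Complex.log_ofReal_mul (by linarith) (neg_ne_zero.2 hI0), Complex.log_I,
            Complex.log_neg_I]
          ring
        · have e1 : p t - p c = ((t - c : ℝ) : ℂ) * Complex.I := by
            apply Complex.ext <;> simp [hp]
          have e2 : -(p t - p c) = ((t - c : ℝ) : ℂ) * (-Complex.I) := by rw [e1]; ring
          simp only [h, if_true]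
          rw [e2, e1, Complex.log_ofReal_mul (by linarith) hI0,
            Complex.log_ofReal_mul (by linarith) (neg_ne_zero.2 hI0), Complex.log_I,
            Complex.log_neg_I]
          ring
    · exact (hg₁.comp hpc.continuousOn hTL).sub (hg₂.comp hpc.continuousOn hTR)
    · intro t ht
      rw [Complex.exp_sub, ← hf₁ _ (hTL t ht), ← hf₂ _ (hTR t ht), div_self]
      rw [hf₁ _ (hTL t ht)]
      exact Complex.exp_ne_zero _
  obtain ⟨m₁, m₂, c₁, c₂, e₁, e₂, h⟩ := hn
  have hFu : F = FL ∪ FR := by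
    ext z
    constructor
    · intro hz
      rcases le_total z.re a with h | h
      exacts [Or.inl ⟨hz, h⟩, Or.inr ⟨hz, h⟩]
    · rintro (h | h) <;> exact h.1
  set g : ℂ → ℂ := fun z => if z.re ≤ a then g₁ z - m₁ z else g₂ z - m₂ z with hg
  have hgL : EqOn g (fun z => g₁ z - m₁ z) FL := fun z hz => if_pos hz.2
  have hgR : EqOn g (fun z => g₂ z - m₂ z) FR := by
    intro z hz
    by_cases hza : z.re ≤ a
    · have hpz : p z.im = z := Complex.ext (le_antisymm hz.2 hza) rfl
      have this : g₁ z - g₂ z = m₁ z - m₂ z := by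
        have h2 := h z.im ((hTm _).2 (hpz.symm ▸ hz.1))
        simpa only [hpz] using h2
      simp only [hg, hza, if_true]
      linear_combination this
    · simp [hg, hza]
  refine ⟨g, ?_, ?_⟩
  · rw [hFu]
    exact ((hg₁.sub c₁).congr hgL).union_of_isClosed ((hg₂.sub c₂).congr hgR)
      (hF.isClosed.inter (isClosed_le Complex.continuous_re continuous_const))
      (hF.isClosed.inter (isClosed_le continuous_const Complex.continuous_re))
  · intro z hz
    rw [hFu] at hz
    rcases hz with hz | hz
    · rw [hgL hz, Complex.exp_sub, e₁ z hz, div_one, hf₁ z hz]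
    · rw [hgR hz, Complex.exp_sub, e₂ z hz, div_one, hf₂ z hz]

lemma HasLog.glue_im {F : Set ℂ} (hF : IsCompact F) (hH : LogTranslates F) (a : ℝ) {f : ℂ → ℂ}
    (hL : HasLog (F ∩ {z | z.im ≤ a}) f) (hR : HasLog (F ∩ {z | a ≤ z.im}) f) :
    HasLog F f := by
  have hII : ∀ z : ℂ, Complex.I * (-Complex.I * z) = z := fun z => by
    linear_combination (-z) * Complex.I_mul_I
  have hII' : ∀ z : ℂ, -Complex.I * (Complex.I * z) = z := fun z => by
    linear_combination (-z) * Complex.I_mul_I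
  set F' : Set ℂ := (fun z => -Complex.I * z) '' F with hF'
  have hm : ∀ z, z ∈ F' → Complex.I * z ∈ F := by
    rintro _ ⟨w, hw, rfl⟩
    simpa only [hII] using hw
  have hm' : ∀ z, Complex.I * z ∈ F → z ∈ F' := fun z hz => ⟨_, hz, hII' z⟩
  have hcont : Continuous fun z : ℂ => Complex.I * z := by fun_prop
  have hF'c : IsCompact F' := hF.image (by fun_prop)
  have hH' : LogTranslates F' := by
    intro c hc
    obtain ⟨g, hg, he⟩ := (hH (Complex.I * c) fun h => hc (hm' c h)).comp
      (E := F') hcont.continuousOn hm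
    refine ⟨fun z => g z - Complex.log Complex.I, hg.sub continuousOn_const, fun z hz => ?_⟩
    rw [Complex.exp_sub, ← he z hz, Complex.exp_log Complex.I_ne_zero]
    show z - c = (Complex.I * z - Complex.I * c) / Complex.I
    rw [← mul_sub, mul_div_cancel_left₀ _ Complex.I_ne_zero]
  have hre : ∀ z : ℂ, (Complex.I * z).im = z.re := fun z => by simp
  have h1 := HasLog.glue_re hF'c hH' a (f := fun z => f (Complex.I * z))
    (hL.comp hcont.continuousOn fun z hz => ⟨hm z hz.1, by
      show (Complex.I * z).im ≤ a
      rw [hre]; exact hz.2⟩)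
    (hR.comp hcont.continuousOn fun z hz => ⟨hm z hz.1, by
      show a ≤ (Complex.I * z).im
      rw [hre]; exact hz.2⟩)
  have h2 := h1.comp (E := F) (φ := fun z => -Complex.I * z) (by fun_prop)
    fun z hz => ⟨z, hz, rfl⟩
  simpa only [hII] using h2

/-- A property of compact intervals that is additive and holds locally holds everywhere. -/
lemma interval_induction (P : ℝ → ℝ → Prop)
    (hglue : ∀ a b c, a ≤ b → b ≤ c → P a b → P b c → P a c)
    (hloc : ∀ x, ∃ ε > 0, ∀ a b, x - ε ≤ a → a ≤ b → b ≤ x + ε → P a b)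
    {a b : ℝ} (hab : a ≤ b) : P a b := by
  set S : Set ℝ := {t | a ≤ t ∧ t ≤ b ∧ P a t} with hS
  have haS : a ∈ S := by
    obtain ⟨ε, hε, h⟩ := hloc a
    exact ⟨le_rfl, hab, h a a (by linarith) le_rfl (by linarith)⟩
  have hSb : BddAbove S := ⟨b, fun t ht => ht.2.1⟩
  obtain ⟨ε, hε, h⟩ := hloc (sSup S)
  obtain ⟨t, ht, hts⟩ := exists_lt_of_lt_csSup ⟨a, haS⟩ (show sSup S - ε < sSup S by linarith)
  have htle := le_csSup hSb ht
  have htm : t ≤ min b (sSup S + ε) := le_min ht.2.1 (by linarith)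
  have hP : P a (min b (sSup S + ε)) :=
    hglue _ _ _ ht.1 htm ht.2.2 (h _ _ hts.le htm (min_le_right _ _))
  have hle := le_csSup hSb (show min b (sSup S + ε) ∈ S from
    ⟨ht.1.trans htm, min_le_left _ _, hP⟩)
  rcases min_choice b (sSup S + ε) with h' | h'
  · rwa [h'] at hP
  · rw [h'] at hle; linarith

lemma hasLog_local {F : Set ℂ} (hF : IsClosed F) {f : ℂ → ℂ} (hf : ContinuousOn f F)
    (h0 : ∀ z ∈ F, f z ≠ 0) (z₀ : ℂ) : ∃ ε > 0, HasLog (F ∩ Metric.ball z₀ ε) f := by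
  by_cases hz : z₀ ∈ F
  · obtain ⟨ε, hε, h⟩ := Metric.continuousOn_iff.1 hf z₀ hz ‖f z₀‖ (norm_pos_iff.2 (h0 z₀ hz))
    have hsl : ∀ z ∈ F ∩ Metric.ball z₀ ε, f z / f z₀ ∈ Complex.slitPlane := by
      intro z hz'
      have h1 := h z hz'.1 hz'.2
      refine Complex.ball_one_subset_slitPlane ?_
      rw [Metric.mem_ball, dist_eq_norm, div_sub_one (h0 z₀ hz), norm_div,
        div_lt_one (norm_pos_iff.2 (h0 z₀ hz)), ← dist_eq_norm]
      exact h1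
    refine ⟨ε, hε, fun z => Complex.log (f z / f z₀) + Complex.log (f z₀), ?_, ?_⟩
    · exact (ContinuousOn.clog ((hf.mono inter_subset_left).div_const _) hsl).add
        continuousOn_const
    · intro z hz'
      rw [Complex.exp_add, Complex.exp_log (Complex.slitPlane_ne_zero (hsl z hz')),
        Complex.exp_log (h0 z₀ hz), div_mul_cancel₀ _ (h0 z₀ hz)]
  · obtain ⟨ε, hε, h⟩ := Metric.isOpen_iff.1 hF.isOpen_compl z₀ hz
    exact ⟨ε, hε, fun _ => 0, continuousOn_const, fun z hz' => absurd hz'.1 (h hz'.2)⟩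

/-- If all translates `z - c`, `c ∉ F`, have logarithms on the compact set `F`, then so does
every nowhere zero continuous function. -/
lemma hasLog_of_logTranslates {F : Set ℂ} (hF : IsCompact F) (hH : LogTranslates F) {f : ℂ → ℂ}
    (hf : ContinuousOn f F) (h0 : ∀ z ∈ F, f z ≠ 0) : HasLog F f := by
  have hcomp : ∀ p q r s : ℝ, IsCompact (F ∩ (Icc p q ×ℂ Icc r s)) := fun p q r s =>
    hF.inter_right (isClosed_Icc.reProdIm isClosed_Icc)
  have hcol : ∀ x : ℝ, ∀ r s : ℝ, r ≤ s →
      ∃ ε > 0, HasLog (F ∩ (Icc (x - ε) (x + ε) ×ℂ Icc r s)) f := by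
    intro x r s hrs
    refine interval_induction
      (fun r s => ∃ ε > 0, HasLog (F ∩ (Icc (x - ε) (x + ε) ×ℂ Icc r s)) f) ?_ ?_ hrs
    · rintro r t s hrt hts ⟨ε₁, hε₁, h₁⟩ ⟨ε₂, hε₂, h₂⟩
      refine ⟨min ε₁ ε₂, lt_min hε₁ hε₂, HasLog.glue_im (hcomp _ _ _ _)
        (hH.inter_rect _ _ _ _) t (h₁.mono ?_) (h₂.mono ?_)⟩
      · rintro z ⟨⟨hz, h1, h2⟩, h3⟩
        have := min_le_left ε₁ ε₂
        exact ⟨hz, ⟨by linarith [h1.1], by linarith [h1.2]⟩, h2.1, h3⟩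
      · rintro z ⟨⟨hz, h1, h2⟩, h3⟩
        have := min_le_right ε₁ ε₂
        exact ⟨hz, ⟨by linarith [h1.1], by linarith [h1.2]⟩, h3, h2.2⟩
    · intro y
      obtain ⟨ε, hε, h⟩ := hasLog_local hF.isClosed hf h0 ⟨x, y⟩
      refine ⟨ε / 3, by positivity, fun r s hr hrs hs => ⟨ε / 3, by positivity, h.mono ?_⟩⟩
      rintro z ⟨hz, h1, h2⟩
      refine ⟨hz, ?_⟩
      have ha : |(z - ⟨x, y⟩ : ℂ).re| ≤ ε / 3 := by
        rw [abs_le]; constructor <;> simp <;> linarith [h1.1, h1.2]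
      have hb : |(z - ⟨x, y⟩ : ℂ).im| ≤ ε / 3 := by
        rw [abs_le]; constructor <;> simp <;> linarith [h2.1, h2.2]
      rw [Metric.mem_ball, dist_eq_norm]
      linarith [Complex.norm_le_abs_re_add_abs_im (z - ⟨x, y⟩ : ℂ)]
  obtain ⟨R, hR⟩ := hF.isBounded.subset_closedBall (0 : ℂ)
  have hR' : ∀ z ∈ F, z ∈ (Icc (-|R|) |R| ×ℂ Icc (-|R|) |R|) := by
    intro z hz
    have h1 : ‖z‖ ≤ |R| := (mem_closedBall_zero_iff.1 (hR hz)).trans (le_abs_self R)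
    exact ⟨abs_le.1 ((Complex.abs_re_le_norm z).trans h1),
      abs_le.1 ((Complex.abs_im_le_norm z).trans h1)⟩
  have hRR : -|R| ≤ |R| := by linarith [abs_nonneg R]
  have : HasLog (F ∩ (Icc (-|R|) |R| ×ℂ Icc (-|R|) |R|)) f := by
    refine interval_induction
      (fun p q => HasLog (F ∩ (Icc p q ×ℂ Icc (-|R|) |R|)) f) ?_ ?_ hRR
    · intro p t q hpt htq h₁ h₂
      refine HasLog.glue_re (hcomp _ _ _ _) (hH.inter_rect _ _ _ _) t (h₁.mono ?_) (h₂.mono ?_)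
      · rintro z ⟨⟨hz, h1, h2⟩, h3⟩
        exact ⟨hz, ⟨h1.1, h3⟩, h2⟩
      · rintro z ⟨⟨hz, h1, h2⟩, h3⟩
        exact ⟨hz, ⟨h3, h1.2⟩, h2⟩
    · intro x
      obtain ⟨ε, hε, h⟩ := hcol x _ _ hRR
      refine ⟨ε, hε, fun p q hp hpq hq => h.mono ?_⟩
      rintro z ⟨hz, h1, h2⟩
      exact ⟨hz, ⟨hp.trans h1.1, h1.2.trans hq⟩, h2⟩
  exact this.mono fun z hz => ⟨hz, hR' z hz⟩

/-- Plane form of Janiszewski's theorem. If `A ∩ B` split into closed pieces `P` and `Q`, the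
map equal to `exp (iπu)` on `A` and to `exp (-iπu)` on `B`, with `u = 0` on `P` and `u = 1`
on `Q`, would have no continuous logarithm on `A ∪ B`. -/
lemma isPreconnected_inter_of_logTranslates {A B : Set ℂ} (hA : IsCompact A) (hB : IsCompact B)
    (hAc : IsPreconnected A) (hBc : IsPreconnected B) (hH : LogTranslates (A ∪ B)) :
    IsPreconnected (A ∩ B) := by
  rw [isPreconnected_closed_iff]
  intro u v hu hv huv hne_u hne_v
  by_contra hcon
  obtain ⟨x, hxAB, hxu⟩ := hne_u
  obtain ⟨y, hyAB, hyv⟩ := hne_v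
  have hPc : IsClosed (A ∩ B ∩ u) := (hA.isClosed.inter hB.isClosed).inter hu
  have hQc : IsClosed (A ∩ B ∩ v) := (hA.isClosed.inter hB.isClosed).inter hv
  have hd : Disjoint (A ∩ B ∩ u) (A ∩ B ∩ v) :=
    Set.disjoint_left.2 fun z h1 h2 => hcon ⟨z, h1.1, h1.2, h2.2⟩
  obtain ⟨φ, h0, h1, -⟩ := exists_continuous_zero_one_of_isClosed hPc hQc hd
  have hpi : Complex.exp (Real.pi * Complex.I) = -1 := Complex.exp_pi_mul_I
  classical
  set e : ℂ → ℂ := fun z => Real.pi * Complex.I * (φ z : ℂ) with he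
  have hec : Continuous e := by
    have := φ.continuous
    fun_prop
  set f : ℂ → ℂ := fun z => if z ∈ A then Complex.exp (e z) else Complex.exp (-e z) with hf
  have hfA : EqOn f (fun z => Complex.exp (e z)) A := fun z hz => if_pos hz
  have hfB : EqOn f (fun z => Complex.exp (-e z)) B := by
    intro z hz
    by_cases hzA : z ∈ A
    · simp only [hf, hzA, if_true]
      rcases huv ⟨hzA, hz⟩ with h | h
      · have : φ z = 0 := h0 ⟨⟨hzA, hz⟩, h⟩
        simp [he, this]
      · have : φ z = 1 := h1 ⟨⟨hzA, hz⟩, h⟩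
        simp [he, this, Complex.exp_neg]
    · simp [hf, hzA]
  have hfc : ContinuousOn f (A ∪ B) :=
    (ContinuousOn.congr (by fun_prop) hfA).union_of_isClosed
      (ContinuousOn.congr (by fun_prop) hfB) hA.isClosed hB.isClosed
  obtain ⟨g, hg, hfg⟩ := hasLog_of_logTranslates (hA.union hB) hH hfc fun z _ => by
    simp only [hf]
    split_ifs <;> exact Complex.exp_ne_zero _
  have k1 := const_of_exp_eq_one hAc (h := fun z => g z - e z)
    ((hg.mono subset_union_left).sub hec.continuousOn) (fun z hz => by
      rw [Complex.exp_sub, ← hfg z (Or.inl hz), hfA hz, div_self (Complex.exp_ne_zero _)])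
    hxAB.1 hyAB.1
  have k2 := const_of_exp_eq_one hBc (h := fun z => g z + e z)
    ((hg.mono subset_union_right).add hec.continuousOn) (fun z hz => by
      rw [Complex.exp_add, ← hfg z (Or.inr hz), hfB hz, ← Complex.exp_add]
      simp)
    hxAB.2 hyAB.2
  have ex : e x = 0 := by
    have : φ x = 0 := h0 ⟨hxAB, hxu⟩
    simp [he, this]
  have ey : e y = Real.pi * Complex.I := by
    have : φ y = 1 := h1 ⟨hyAB, hyv⟩
    simp [he, this]
  simp only [ex, ey] at k1 k2
  have : (Real.pi : ℂ) * Complex.I = 0 := by linear_combination (k1 - k2) / 2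
  simp [Real.pi_ne_zero] at this

/-! ### Janiszewski's theorem on the sphere -/

/-- If the logarithm of `z - c` exists on `F`, so does that of `z - c'` for `c'` closer to `c`
than `F` is. -/
lemma HasLog.move {F : Set ℂ} {c c' : ℂ} (h : HasLog F (fun z => z - c))
    (hc : ∀ z ∈ F, dist c' c < dist z c) : HasLog F (fun z => z - c') := by
  obtain ⟨g, hg, he⟩ := h
  have hne : ∀ z ∈ F, z - c ≠ 0 := fun z hz =>
    sub_ne_zero.2 (dist_pos.1 (dist_nonneg.trans_lt (hc z hz)))
  have hsl : ∀ z ∈ F, (z - c') / (z - c) ∈ Complex.slitPlane := by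
    intro z hz
    refine Complex.ball_one_subset_slitPlane ?_
    rw [Metric.mem_ball, dist_eq_norm, div_sub_one (hne z hz), norm_div,
      div_lt_one (norm_pos_iff.2 (hne z hz)), ← dist_eq_norm z c]
    have : z - c' - (z - c) = -(c' - c) := by ring
    rw [this, norm_neg, ← dist_eq_norm]
    exact hc z hz
  refine ⟨fun z => g z + Complex.log ((z - c') / (z - c)), ?_, fun z hz => ?_⟩
  · exact hg.add (ContinuousOn.clog (ContinuousOn.div (by fun_prop) (by fun_prop) hne) hsl)
  · rw [Complex.exp_add, Complex.exp_log (Complex.slitPlane_ne_zero (hsl z hz)), ← he z hz,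
      mul_div_cancel₀ _ (hne z hz)]

lemma hasLog_sub_of_large {F : Set ℂ} {c : ℂ} (h : ∀ z ∈ F, ‖z‖ < ‖c‖) :
    HasLog F (fun z => z - c) := by
  rcases eq_or_ne c 0 with rfl | hc
  · exact ⟨fun _ => 0, continuousOn_const, fun z hz => absurd (h z hz) (by simp)⟩
  refine hasLog_sub_of_slit (w := -c⁻¹) (by simpa using hc) fun z hz => ?_
  refine Complex.ball_one_subset_slitPlane ?_
  have : -c⁻¹ * (z - c) - 1 = -(z / c) := by field_simp; ring
  rw [Metric.mem_ball, dist_eq_norm, this, norm_neg, norm_div,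
    div_lt_one (norm_pos_iff.2 hc)]
  exact h z hz

/-- Points in a common small ball off `F` are simultaneously good or bad. -/
lemma hasLog_sub_locally_const {F : Set ℂ} (hF : IsClosed F) {c : ℂ} (hc : c ∉ F) :
    ∃ ε > 0, ∀ c', dist c' c < ε → c' ∉ F ∧
      (HasLog F (fun z => z - c) ↔ HasLog F (fun z => z - c')) := by
  obtain ⟨ε, hε, h⟩ := Metric.isOpen_iff.1 hF.isOpen_compl c hc
  have hd : ∀ z ∈ F, ε ≤ dist z c := fun z hz => not_lt.1 fun hlt => h hlt hz
  refine ⟨ε / 2, by positivity, fun c' hc' => ⟨h (by rw [Metric.mem_ball]; linarith),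
    fun hl => hl.move fun z hz => ?_, fun hl => hl.move fun z hz => ?_⟩⟩
  · linarith [hd z hz]
  · rw [dist_comm c c']
    linarith [hd z hz, dist_triangle z c' c]

instance factFinrankThree : Fact (Module.finrank ℝ (EuclideanSpace ℝ (Fin 3)) = 2 + 1) :=
  ⟨by simp⟩

/-- Stereographic projection from `v`, with values in `ℂ`. -/
lemma exists_stereo (v : S2) : ∃ (e : S2 → ℂ) (s : ℂ → S2), ContinuousOn e {v}ᶜ ∧ Continuous s ∧
    (∀ x, x ≠ v → s (e x) = x) ∧ (∀ z, e (s z) = z) ∧ ∀ z, s z ≠ v := by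
  let φ := stereographic' 2 v
  let ι := Complex.orthonormalBasisOneI.repr
  have hs : φ.source = {v}ᶜ := stereographic'_source v
  have ht : φ.target = univ := stereographic'_target v
  refine ⟨fun x => ι.symm (φ x), fun z => φ.symm (ι z), ?_, ?_, ?_, ?_, ?_⟩
  · exact ι.symm.continuous.comp_continuousOn (hs ▸ φ.continuousOn)
  · have := φ.continuousOn_symm
    rw [ht, continuousOn_univ] at this
    exact this.comp ι.continuous
  · intro x hx
    simp only [LinearIsometryEquiv.apply_symm_apply]
    exact φ.left_inv (by rw [hs]; exact hx)
  · intro z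
    simp only
    rw [φ.right_inv (by rw [ht]; trivial), LinearIsometryEquiv.symm_apply_apply]
  · intro z
    have : φ.symm (ι z) ∈ φ.source := φ.map_target (by rw [ht]; trivial)
    rw [hs] at this
    exact this

/-- Janiszewski's theorem: two subcontinua of the sphere whose union is proper and does not
separate have connected intersection. -/
lemma janiszewski {A B : Set S2} (hA : IsCompact A) (hB : IsCompact B) (hAc : IsPreconnected A)
    (hBc : IsPreconnected B) (hne : A ∪ B ≠ univ) (hns : IsPreconnected (A ∪ B)ᶜ) :
    IsPreconnected (A ∩ B) := by
  obtain ⟨v, hv⟩ := (Set.ne_univ_iff_exists_notMem _).1 hne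
  obtain ⟨e, s, hec, hsc, hse, hes, hsv⟩ := exists_stereo v
  have hsub : A ∪ B ⊆ {v}ᶜ := fun x hx h => hv (h ▸ hx)
  have hsubA := subset_union_left.trans hsub
  have hsubB := subset_union_right.trans hsub
  have hinj : InjOn e {v}ᶜ := fun x hx y hy h => by rw [← hse x hx, h, hse y hy]
  have hH : LogTranslates (e '' A ∪ e '' B) := by
    rw [← image_union]
    set F := e '' (A ∪ B) with hFdef
    have hF : IsCompact F := (hA.union hB).image_of_continuousOn (hec.mono hsub)
    have hsF : ∀ z, s z ∈ A ∪ B → z ∈ F := fun z hz => ⟨_, hz, hes z⟩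
    have hFs : ∀ z ∈ F, s z ∈ A ∪ B := by
      rintro _ ⟨x, hx, rfl⟩
      rwa [hse x (hsub hx)]
    -- `good` and `bad` split the plane off `F` into open sets; `good` contains a neighbourhood
    -- of infinity
    set good : Set ℂ := {c | c ∉ F ∧ HasLog F (fun z => z - c)} with hgood
    set bad : Set ℂ := {c | c ∉ F ∧ ¬ HasLog F (fun z => z - c)} with hbad
    have hgo : IsOpen good := by
      refine Metric.isOpen_iff.2 fun c hc => ?_
      obtain ⟨ε, hε, h⟩ := hasLog_sub_locally_const hF.isClosed hc.1
      exact ⟨ε, hε, fun c' hc' => ⟨(h c' hc').1, (h c' hc').2.1 hc.2⟩⟩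
    have hbo : IsOpen bad := by
      refine Metric.isOpen_iff.2 fun c hc => ?_
      obtain ⟨ε, hε, h⟩ := hasLog_sub_locally_const hF.isClosed hc.1
      exact ⟨ε, hε, fun c' hc' => ⟨(h c' hc').1, fun hl => hc.2 ((h c' hc').2.2 hl)⟩⟩
    have hgc : IsCompact goodᶜ := by
      obtain ⟨R, hR⟩ := hF.isBounded.subset_closedBall (0 : ℂ)
      refine (ProperSpace.isCompact_closedBall (0 : ℂ) R).of_isClosed_subset hgo.isClosed_compl ?_
      intro c hc
      by_contra hcR
      refine hc ⟨fun h => hcR (hR h), hasLog_sub_of_large fun z hz => ?_⟩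
      rw [mem_closedBall_zero_iff, not_le] at hcR
      exact (mem_closedBall_zero_iff.1 (hR hz)).trans_lt hcR
    have hU : IsOpen ({v}ᶜ ∩ e ⁻¹' bad) := hec.isOpen_inter_preimage isOpen_compl_singleton hbo
    have hV : IsOpen (s '' goodᶜ)ᶜ := (hgc.image hsc).isClosed.isOpen_compl
    intro c hc
    by_contra hcbad
    obtain ⟨x, -, hxU, hxV⟩ := hns _ _ hU hV
      (fun x hx => by
        by_cases hxb : x ∈ {v}ᶜ ∩ e ⁻¹' bad
        · exact Or.inl hxb
        right
        rintro ⟨z, hz, rfl⟩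
        have hzF : z ∉ F := fun h => hx (hFs z h)
        refine hxb ⟨hsv z, ?_⟩
        rw [mem_preimage, hes]
        exact ⟨hzF, fun hl => hz ⟨hzF, hl⟩⟩)
      ⟨s c, fun h => hc (hsF c h), hsv c, by rw [mem_preimage, hes]; exact ⟨hc, hcbad⟩⟩
      ⟨v, hv, fun ⟨z, _, hz⟩ => hsv z hz⟩
    exact hxV ⟨e x, fun hg => hxU.2.2 hg.2, hse x hxU.1⟩
  have key := isPreconnected_inter_of_logTranslates
    (hA.image_of_continuousOn (hec.mono hsubA)) (hB.image_of_continuousOn (hec.mono hsubB))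
    (hAc.image e (hec.mono hsubA)) (hBc.image e (hec.mono hsubB)) hH
  rw [← hinj.image_inter hsubA hsubB] at key
  have := key.image s hsc.continuousOn
  rw [image_image] at this
  convert this using 1
  ext x
  constructor
  · exact fun hx => ⟨x, hx, hse x (hsubA hx.1)⟩
  · rintro ⟨y, hy, rfl⟩
    show s (e y) ∈ _
    rwa [hse y (hsubA hy.1)]

/-! ### Composants of indecomposable continua -/

/-- If a connected space is the union of two closed sets with connected intersection, each of
them is connected. -/
lemma isConnected_union_piece {T : Type*} [TopologicalSpace T] [PreconnectedSpace T] {A B : Set T}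
    (hA : IsClosed A) (hB : IsClosed B) (hAB : A ∪ B = univ) (hK : IsConnected (A ∩ B)) :
    IsConnected A := by
  refine ⟨hK.nonempty.mono inter_subset_left, ?_⟩
  -- a closed set on which `A` splits off, missing `A ∩ B`, would be clopen in the whole space
  have main : ∀ s t : Set T, IsClosed s → IsClosed t → A ⊆ s ∪ t → (A ∩ t).Nonempty →
      A ∩ B ⊆ s → (A ∩ (s ∩ t)).Nonempty := by
    intro s t hs ht hst htne hKs
    obtain ⟨k, hk⟩ := hK.nonempty
    obtain ⟨x, -, hx1, hx2⟩ := (isPreconnected_closed_iff.1 (isPreconnected_univ (α := T)))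
      (A ∩ t) (A ∩ s ∪ B) (hA.inter ht) ((hA.inter hs).union hB)
      (fun x _ => by
        rcases (hAB ▸ mem_univ x : x ∈ A ∪ B) with h | h
        · rcases hst h with h' | h'
          exacts [Or.inr (Or.inl ⟨h, h'⟩), Or.inl ⟨h, h'⟩]
        · exact Or.inr (Or.inr h))
      (by simpa using htne) ⟨k, trivial, Or.inr hk.2⟩
    rcases hx2 with h | h
    · exact ⟨x, hx1.1, h.2, hx1.2⟩
    · exact ⟨x, hx1.1, hKs ⟨hx1.1, h⟩, hx1.2⟩
  rw [isPreconnected_closed_iff]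
  intro s t hs ht hst hsne htne
  by_contra hcon
  rcases (isPreconnected_iff_subset_of_disjoint_closed.1 hK.isPreconnected) s t hs ht
    (inter_subset_left.trans hst)
    (by
      rw [← Set.not_nonempty_iff_eq_empty]
      exact fun ⟨x, hx⟩ => hcon ⟨x, hx.1.1, hx.2⟩) with h | h
  · exact hcon (main s t hs ht hst htne h)
  · obtain ⟨x, hx⟩ := main t s ht hs (by rwa [union_comm]) hsne h
    exact hcon ⟨x, hx.1, hx.2.2, hx.2.1⟩

/-- A proper closed connected set with interior points decomposes the space. -/
lemma exists_decomposition {T : Type*} [TopologicalSpace T] [PreconnectedSpace T] {K : Set T}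
    (hK : IsClosed K) (hKc : IsConnected K) (hne : K ≠ univ) (hi : (interior K).Nonempty) :
    ∃ A B : Set T, IsClosed A ∧ IsConnected A ∧ A ≠ univ ∧ IsClosed B ∧ IsConnected B ∧ B ≠ univ ∧
      A ∪ B = univ := by
  by_cases hc : IsPreconnected Kᶜ
  · refine ⟨K, closure Kᶜ, hK, hKc, hne, isClosed_closure,
      ⟨(nonempty_compl.2 hne).closure, hc.closure⟩, ?_, ?_⟩
    · rw [closure_compl, Ne, compl_univ_iff]
      exact hi.ne_empty
    · exact univ_subset_iff.1 fun x _ =>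
        (em (x ∈ K)).imp id fun h => subset_closure h
  · simp only [IsPreconnected, not_forall] at hc
    obtain ⟨u, v, hu, hv, huv, hun, hvn, hem⟩ := hc
    have hAc : IsClosed (Kᶜ ∩ v)ᶜ := (hK.isOpen_compl.inter hv).isClosed_compl
    have hBc : IsClosed (Kᶜ ∩ u)ᶜ := (hK.isOpen_compl.inter hu).isClosed_compl
    have hun' : (Kᶜ ∩ v)ᶜ ∪ (Kᶜ ∩ u)ᶜ = univ := by
      refine univ_subset_iff.1 fun x _ => ?_
      by_contra h
      simp only [mem_union, mem_compl_iff, not_or, not_not] at h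
      exact hem ⟨x, h.1.1, h.2.2, h.1.2⟩
    have hin : (Kᶜ ∩ v)ᶜ ∩ (Kᶜ ∩ u)ᶜ = K := by
      ext x
      constructor
      · rintro ⟨h1, h2⟩
        by_contra hx
        rcases huv hx with h | h
        exacts [h2 ⟨hx, h⟩, h1 ⟨hx, h⟩]
      · exact fun hx => ⟨fun h => h.1 hx, fun h => h.1 hx⟩
    refine ⟨_, _, hAc, isConnected_union_piece hAc hBc hun' (hin.symm ▸ hKc), ?_, hBc,
      isConnected_union_piece hBc hAc (by rwa [union_comm]) (by rwa [inter_comm, hin]), ?_, hun'⟩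
    · rw [Ne, compl_univ_iff]; exact hvn.ne_empty
    · rw [Ne, compl_univ_iff]; exact hun.ne_empty

/-- By the Baire category theorem, a composant of an indecomposable continuum is not everything:
it is a countable union of proper subcontinua, each nowhere dense. -/
lemma exists_notMem_composant {α : Type*} [MetricSpace α] {Y : Set α} (hY : IsIndecomposable Y)
    {p : α} (hp : p ∈ Y) : ∃ q ∈ Y, q ∉ composant Y p := by
  by_contra! hall
  have hYc : IsCompact Y := hY.1.1
  have : CompactSpace Y := isCompact_iff_compactSpace.1 hYc
  have : ConnectedSpace Y := isConnected_iff_connectedSpace.1 hY.1.2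
  let b := TopologicalSpace.countableBasis Y
  have hb : TopologicalSpace.IsTopologicalBasis b := TopologicalSpace.isBasis_countableBasis Y
  have hbc : Countable b := (TopologicalSpace.countable_countableBasis Y).to_subtype
  let p' : Y := ⟨p, hp⟩
  let f : b → Set Y := fun B => connectedComponentIn (B : Set Y)ᶜ p'
  have hbne : ∀ B : b, (B : Set Y).Nonempty := fun B =>
    TopologicalSpace.nonempty_of_mem_countableBasis B.2
  have hfc : ∀ B : b, IsClosed (f B) := by
    intro B
    by_cases hpB : p' ∈ (B : Set Y)ᶜ
    · refine isClosed_of_closure_subset ?_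
      exact isPreconnected_connectedComponentIn.closure.subset_connectedComponentIn
        (subset_closure (mem_connectedComponentIn hpB))
        (closure_minimal (connectedComponentIn_subset _ _) (hb.isOpen B.2).isClosed_compl)
    · simp only [f, connectedComponentIn_eq_empty hpB, isClosed_empty]
  have hcov : ⋃ B, f B = univ := by
    refine univ_subset_iff.1 fun q _ => ?_
    obtain ⟨K, ⟨hK, hKY, hKne, hpK⟩, hqK⟩ := hall q q.2
    set K' : Set Y := Subtype.val ⁻¹' K with hK'
    have him : Subtype.val '' K' = K := by
      rw [hK', Subtype.image_preimage_coe, inter_eq_right.2 hKY]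
    have hcl : IsClosed K' := hK.1.isClosed.preimage continuous_subtype_val
    have hpre : IsPreconnected K' := by
      rw [← Topology.IsInducing.subtypeVal.isPreconnected_image, him]
      exact hK.2.isPreconnected
    obtain ⟨y, hyY, hyK⟩ := Set.exists_of_ssubset (hKY.ssubset_of_ne hKne)
    obtain ⟨B, hB, hyB, hBK⟩ := hb.exists_subset_of_mem_open
      (show (⟨y, hyY⟩ : Y) ∈ K'ᶜ from hyK) hcl.isOpen_compl
    exact mem_iUnion.2 ⟨⟨B, hB⟩, hpre.subset_connectedComponentIn (show p' ∈ K' from hpK)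
      (subset_compl_comm.1 hBK) hqK⟩
  obtain ⟨B, hB⟩ := nonempty_interior_of_iUnion_of_closed hfc hcov
  have hfne : (f B).Nonempty := hB.mono interior_subset
  have hfpc : IsConnected (f B) := ⟨hfne, isPreconnected_connectedComponentIn⟩
  have hfu : f B ≠ univ := by
    obtain ⟨y, hy⟩ := hbne B
    exact fun h => connectedComponentIn_subset _ _ (h ▸ mem_univ y : y ∈ f B) hy
  obtain ⟨A₁, A₂, hc₁, hn₁, hu₁, hc₂, hn₂, hu₂, hun⟩ := exists_decomposition (hfc B) hfpc hfu hB
  have hcont : ∀ A : Set Y, IsClosed A → IsConnected A → IsContinuum (Subtype.val '' A : Set α) :=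
    fun A h1 h2 => ⟨h1.isCompact.image continuous_subtype_val,
      h2.image _ continuous_subtype_val.continuousOn⟩
  have hsub : ∀ A : Set Y, (Subtype.val '' A : Set α) ⊆ Y := fun A => by
    rintro _ ⟨x, -, rfl⟩; exact x.2
  have hprop : ∀ A : Set Y, A ≠ univ → (Subtype.val '' A : Set α) ≠ Y := by
    intro A hA h
    refine hA (univ_subset_iff.1 fun x _ => ?_)
    obtain ⟨y, hy, hyx⟩ := (h.symm.subset x.2 : (x : α) ∈ Subtype.val '' A)
    rwa [← Subtype.ext hyx]
  refine hY.2 ⟨_, _, hcont _ hc₁ hn₁, hsub _, hprop _ hu₁, hcont _ hc₂ hn₂, hsub _, hprop _ hu₂, ?_⟩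
  rw [← image_union, hun, image_univ, Subtype.range_coe]

lemma union_proper {α : Type*} [TopologicalSpace α] {Y K L : Set α} (hY : IsIndecomposable Y)
    (hK : IsContinuum K) (hKY : K ⊆ Y) (hKne : K ≠ Y) (hL : IsContinuum L) (hLY : L ⊆ Y)
    (hLne : L ≠ Y) (hKL : (K ∩ L).Nonempty) :
    IsContinuum (K ∪ L) ∧ K ∪ L ⊆ Y ∧ K ∪ L ≠ Y :=
  ⟨⟨hK.1.union hL.1, hK.2.union hKL hL.2⟩, union_subset hKY hLY,
    fun h => hY.2 ⟨K, L, hK, hKY, hKne, hL, hLY, hLne, h⟩⟩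

/-! ### Continua approaching a boundary point -/

/-- A boundary point of an open set `U` of a locally connected space, with a compact neighbourhood
`N₀`, is approached by a continuum of `N₀ ∩ closure U` that meets both `U` and its boundary. -/
lemma exists_continuum_near {α : Type*} [TopologicalSpace α] [T2Space α] [LocallyConnectedSpace α]
    {U N₀ : Set α} (hU : IsOpen U) {x : α} (hx : x ∈ frontier U) (hN₀ : N₀ ∈ 𝓝 x)
    (hc : IsCompact N₀) :
    ∃ L, IsContinuum L ∧ L ⊆ N₀ ∧ L ⊆ closure U ∧ (L ∩ U).Nonempty ∧ (L ∩ frontier U).Nonempty := by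
  have hxU : x ∉ U := by
    rw [hU.frontier_eq] at hx; exact hx.2
  obtain ⟨N, hNN, hNo, hxN, hNc⟩ :=
    locallyConnectedSpace_iff_subsets_isOpen_isConnected.1 inferInstance x N₀ hN₀
  obtain ⟨y, hyN, hyU⟩ := mem_closure_iff.1 (frontier_subset_closure hx) N hNo hxN
  set W := connectedComponentIn (U ∩ N) y with hW
  have hyW : y ∈ W := mem_connectedComponentIn ⟨hyU, hyN⟩
  have hWs : W ⊆ U ∩ N := connectedComponentIn_subset _ _
  have hWo : IsOpen W := (hU.inter hNo).connectedComponentIn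
  have hWp : IsPreconnected W := isPreconnected_connectedComponentIn
  have hcN : closure W ⊆ N₀ :=
    closure_minimal ((hWs.trans inter_subset_right).trans hNN) hc.isClosed
  have hcU : closure W ⊆ closure U := closure_mono (hWs.trans inter_subset_left)
  refine ⟨closure W, ⟨hc.of_isClosed_subset isClosed_closure hcN, ⟨y, subset_closure hyW⟩,
    hWp.closure⟩, hcN, hcU, ⟨y, subset_closure hyW, hyU⟩, ?_⟩
  by_contra hcon
  have hsubU : closure W ⊆ U := fun w hw => by
    by_contra hwU
    exact hcon ⟨w, hw, by rw [hU.frontier_eq]; exact ⟨hcU hw, hwU⟩⟩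
  -- otherwise the component `W` would be clopen in the connected set `N`
  have hNW : N ⊆ W := by
    refine hNc.isPreconnected.subset_of_closure_inter_subset hWo ⟨y, hyN, hyW⟩ ?_
    have hpre : IsPreconnected (closure W ∩ N) := hWp.subset_closure
      (fun w hw => ⟨subset_closure hw, (hWs hw).2⟩) inter_subset_left
    exact hpre.subset_connectedComponentIn ⟨subset_closure hyW, hyN⟩
      fun w hw => ⟨hsubU hw.1, hw.2⟩
  exact hxU (hWs (hNW hxN)).1

/-- Let `X ⊆ S²` be a nonseparating continuum and `Y` an indecomposable continuum
contained in the boundary of `X`. If `Z` is a nonseparating subcontinuum of `X`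
intersecting an internal composant `C` of `Y`, then `C ∩ Z` is connected. -/
theorem internal_composant_inter_subcontinuum_connected
    (X Y Z : Set S2) (hX : IsContinuum X) (hXns : ¬ Separates X)
    (hY : IsIndecomposable Y) (hYX : Y ⊆ frontier X)
    (hZ : IsContinuum Z) (hZX : Z ⊆ X) (hZns : ¬ Separates Z)
    (C : Set S2) (hC : IsInternalComposant Y C) (hZC : (Z ∩ C).Nonempty) :
    IsConnected (C ∩ Z) := by
  have hXp : IsPreconnected Xᶜ := not_not.1 hXns
  have hZp : IsPreconnected Zᶜ := not_not.1 hZns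
  obtain ⟨⟨p, hpY, hCp⟩, hCint⟩ := hC
  have hXcl : IsClosed X := hX.1.isClosed
  have hYsubX : Y ⊆ X := hYX.trans hXcl.frontier_subset
  have hXne : Xᶜ.Nonempty := by
    rw [nonempty_compl]
    rintro rfl
    rw [frontier_univ] at hYX
    exact hYX hpY
  refine ⟨by rwa [inter_comm], ?_⟩
  intro u v hu hv hcov ⟨a, ⟨haC, haZ⟩, hau⟩ ⟨b, ⟨hbC, hbZ⟩, hbv⟩
  by_contra hcon
  -- a proper subcontinuum `K` of `Y` joining the two pieces of `C ∩ Z`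
  obtain ⟨K, ⟨hK, hKY, hKne⟩, hpK, haK, hbK⟩ : ∃ K : Set S2,
      (IsContinuum K ∧ K ⊆ Y ∧ K ≠ Y) ∧ p ∈ K ∧ a ∈ K ∧ b ∈ K := by
    rw [hCp] at haC hbC
    obtain ⟨K₁, ⟨h1, h2, h3, h4⟩, haK⟩ := haC
    obtain ⟨K₂, ⟨h1', h2', h3', h4'⟩, hbK⟩ := hbC
    exact ⟨K₁ ∪ K₂, union_proper hY h1 h2 h3 h1' h2' h3' ⟨p, h4, h4'⟩,
      Or.inl h4, Or.inl haK, Or.inr hbK⟩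
  have hKC : K ⊆ C := hCp ▸ subset_sUnion_of_mem ⟨hK, hKY, hKne, hpK⟩
  have hKZX : K ∪ Z ⊆ X := union_subset (hKY.trans hYsubX) hZX
  have hKZcl : IsClosed (K ∪ Z) := (hK.1.union hZ.1).isClosed
  have hKZ : ¬ IsPreconnected (K ∩ Z) := by
    intro h
    obtain ⟨x, hx, hxuv⟩ := h u v hu hv (fun x hx => hcov ⟨hKC hx.1, hx.2⟩)
      ⟨a, ⟨haK, haZ⟩, hau⟩ ⟨b, ⟨hbK, hbZ⟩, hbv⟩
    exact hcon ⟨x, ⟨hKC hx.1, hx.2⟩, hxuv⟩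
  have hsep : ¬ IsPreconnected (K ∪ Z)ᶜ := fun h => by
    refine hKZ (janiszewski hK.1 hZ.1 hK.2.isPreconnected hZ.2.isPreconnected ?_ h)
    obtain ⟨w, hw⟩ := hXne
    exact fun h' => hw (hKZX (h' ▸ mem_univ w))
  -- the piece `U` of the complement of `K ∪ Z` that lies in `X`
  obtain ⟨U, V, hUo, hVo, hUne, hVne, hUV, hdis, hXV⟩ : ∃ U V : Set S2, IsOpen U ∧ IsOpen V ∧
      U.Nonempty ∧ V.Nonempty ∧ (K ∪ Z)ᶜ = U ∪ V ∧ Disjoint U V ∧ Xᶜ ⊆ V := by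
    simp only [IsPreconnected, not_forall] at hsep
    obtain ⟨U, V, hU, hV, hUV, hUn, hVn, hem⟩ := hsep
    set U' := (K ∪ Z)ᶜ ∩ U with hU'
    set V' := (K ∪ Z)ᶜ ∩ V with hV'
    have hU'o : IsOpen U' := hKZcl.isOpen_compl.inter hU
    have hV'o : IsOpen V' := hKZcl.isOpen_compl.inter hV
    have heq : (K ∪ Z)ᶜ = U' ∪ V' := by
      rw [hU', hV', ← inter_union_distrib_left, inter_eq_left.2 hUV]
    have hd : Disjoint U' V' := Set.disjoint_left.2 fun x h1 h2 => hem ⟨x, h1.1, h1.2, h2.2⟩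
    rcases hXp.subset_or_subset hU'o hV'o hd (heq ▸ compl_subset_compl.2 hKZX) with h | h
    · exact ⟨V', U', hV'o, hU'o, hVn, hUn, by rw [heq, union_comm], hd.symm, h⟩
    · exact ⟨U', V', hU'o, hV'o, hUn, hVn, heq, hd, h⟩
  have hUX : U ⊆ X := fun x hx => by
    by_contra h
    exact Set.disjoint_left.1 hdis hx (hXV h)
  have hUY : Disjoint U Y := Set.disjoint_left.2 fun x hxU hxY => by
    have h := hYX hxY
    exact h.2 (interior_maximal hUX hUo hxU)
  have hfr : frontier U ⊆ K ∪ Z := by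
    intro x hx
    rw [hUo.frontier_eq] at hx
    by_contra h
    rcases (hUV ▸ (show x ∈ (K ∪ Z)ᶜ from h) : x ∈ U ∪ V) with h' | h'
    · exact hx.2 h'
    · obtain ⟨w, hwV, hwU⟩ := mem_closure_iff.1 hx.1 V hVo h'
      exact Set.disjoint_left.1 hdis hwU hwV
  -- since `Z` does not separate, the boundary of `U` is not contained in `Z`
  obtain ⟨x, hxU, hxZ⟩ : ∃ x ∈ frontier U, x ∉ Z := by
    by_contra! hall
    have hUZ : ∀ w ∈ U ∪ V, w ∈ Zᶜ := fun w hw hwZ => (hUV ▸ hw : w ∈ (K ∪ Z)ᶜ) (Or.inr hwZ)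
    obtain ⟨y, hy⟩ := hUne
    obtain ⟨w, hw⟩ := hVne
    have h := hZp.subset_of_closure_inter_subset hUo ⟨y, hUZ y (Or.inl hy), hy⟩ fun z hz => by
      by_contra hzU
      exact hz.2 (hall z (by rw [hUo.frontier_eq]; exact ⟨hz.1, hzU⟩))
    exact Set.disjoint_left.1 hdis (h (hUZ w (Or.inr hw))) hw
  have : LocallyConnectedSpace S2 :=
    ChartedSpace.locallyConnectedSpace (EuclideanSpace ℝ (Fin 2)) S2
  obtain ⟨N₀, hN₀, hN₀Z, hN₀c⟩ := local_compact_nhds (hZ.1.isClosed.isOpen_compl.mem_nhds hxZ)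
  -- a continuum touching `Y` only in points of `K`
  obtain ⟨L, hL, hLN, hLU, ⟨y, hyL, hyU⟩, ⟨w, hwL, hwU⟩⟩ :=
    exists_continuum_near hUo hxU hN₀ hN₀c
  have hfrK : ∀ z ∈ L, z ∈ frontier U → z ∈ K := fun z hz hzU =>
    (hfr hzU).resolve_right (hN₀Z (hLN hz))
  have hLK : ∀ z ∈ L, z ∈ Y → z ∈ K := fun z hz hzY => hfrK z hz (by
    rw [hUo.frontier_eq]
    exact ⟨hLU hz, fun h => Set.disjoint_left.1 hUY h hzY⟩)
  obtain ⟨q, hqY, hqC⟩ := exists_notMem_composant hY hpY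
  obtain ⟨z, hzL, K', ⟨hK', hK'Y, hK'ne, hqK'⟩, hzK'⟩ :=
    hCint L hL ⟨w, hwL, hKC (hfrK w hwL hwU)⟩ (fun h => Set.disjoint_left.1 hUY hyU (h hyL))
      (composant Y q) ⟨q, hqY, rfl⟩
  obtain ⟨h1, h2, h3⟩ := union_proper hY hK hKY hKne hK' hK'Y hK'ne ⟨z, hLK z hzL (hK'Y hzK'), hzK'⟩
  exact hqC ⟨K ∪ K', ⟨h1, h2, h3, Or.inl hpK⟩, Or.inr hqK'⟩
end

section
/- Every composant of an indecomposable continuum X has empty interior in X. -/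
/-!
The composant of `p` is a countable union of nowhere dense sets, so the Baire category theorem
applies to the compact space `K`.

* A proper subcontinuum `A` of an indecomposable continuum has empty interior
  (`interior_eq_empty_of_indecomposable`). If `Aᶜ` is connected, then `A` and `closure Aᶜ` would
  decompose the continuum as soon as `A` has an interior point. If `Aᶜ` is separated by `u` and `v`,
  then `A ∪ u` and `A ∪ v` are proper subcontinua decomposing it
  (`isPreconnected_union_of_separation`).
* A proper subcontinuum containing `p` misses some nonempty member `U` of a countable basis, hence
  lies in the connected component of `p` in `Uᶜ`, which is itself a proper subcontinuum. There are
  only countably many such components (`isMeagre_sUnion_of_indecomposable`).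
-/

open Set Metric Topology Filter

/-- Adding to a connected closed set `A` one half of a separation of `Aᶜ` yields a connected set:
a piece of `A ∪ u` disjoint from `A` would be clopen in the whole connected space. -/
theorem isPreconnected_union_of_separation {α : Type*} [TopologicalSpace α] [PreconnectedSpace α]
    {A u v : Set α} (hA : IsConnected A) (hAc : IsClosed A) (hu : IsOpen u) (hv : IsOpen v)
    (huv : Aᶜ ⊆ u ∪ v) (hd : Aᶜ ∩ (u ∩ v) = ∅) :
    IsClosed (A ∪ u) ∧ IsPreconnected (A ∪ u) := by
  have hd' : ∀ x, x ∉ A → x ∈ u → x ∉ v := fun x hx hxu hxv =>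
    (Set.ext_iff.1 hd x).1 ⟨hx, hxu, hxv⟩
  have hs : IsClosed (A ∪ u) := by
    have h : A ∪ u = (Aᶜ ∩ v)ᶜ := by
      ext x
      have := @huv x
      have := hd' x
      simp only [mem_union, mem_compl_iff, mem_inter_iff] at *
      tauto
    rw [h]
    exact (hAc.isOpen_compl.inter hv).isClosed_compl
  refine ⟨hs, (isPreconnected_iff_subset_of_fully_disjoint_closed hs).2 ?_⟩
  have key : ∀ a b : Set α, IsClosed a → IsClosed b → A ∪ u ⊆ a ∪ b → Disjoint a b → A ⊆ a →
      A ∪ u ⊆ a := by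
    intro a b ha hb hab hdis hAa
    have hdis' : ∀ x, x ∈ a → x ∉ b := fun x hx => Set.disjoint_left.1 hdis hx
    have heq : (A ∪ u) ∩ b = (Aᶜ ∩ u) ∩ aᶜ := by
      ext x
      have := @hab x
      have := hdis' x
      have := @hAa x
      simp only [mem_union, mem_compl_iff, mem_inter_iff] at *
      tauto
    have hclopen : IsClopen ((A ∪ u) ∩ b) :=
      ⟨hs.inter hb, heq ▸ (hAc.isOpen_compl.inter hu).inter ha.isOpen_compl⟩
    rcases isClopen_iff.1 hclopen with h | h
    · intro x hx
      exact (hab hx).resolve_right fun hxb => (Set.ext_iff.1 h x).1 ⟨hx, hxb⟩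
    · obtain ⟨x, hx⟩ := hA.nonempty
      exact absurd ((Set.ext_iff.1 h x).2 trivial).2 (hdis' x (hAa hx))
  intro a b ha hb hab hdis
  rcases (isPreconnected_iff_subset_of_fully_disjoint_closed hAc).1 hA.isPreconnected a b ha hb
    (subset_union_left.trans hab) hdis with h | h
  · exact Or.inl (key a b ha hb hab hdis h)
  · exact Or.inr (key b a hb ha (union_comm a b ▸ hab) hdis.symm h)

/-- Proper subcontinua of an indecomposable continuum have empty interior. Here the ambient space
is the continuum, and indecomposability is the hypothesis `hind`. -/
theorem interior_eq_empty_of_indecomposable {α : Type*} [TopologicalSpace α] [PreconnectedSpace α]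
    (hind : ∀ A B : Set α, IsClosed A → IsConnected A → IsClosed B → IsConnected B →
      A ∪ B = univ → A = univ ∨ B = univ)
    {A : Set α} (hAc : IsClosed A) (hA : IsConnected A) (hne : A ≠ univ) :
    interior A = ∅ := by
  by_cases hc : IsPreconnected Aᶜ
  · have hcc : IsConnected (closure Aᶜ) := IsConnected.closure ⟨nonempty_compl.2 hne, hc⟩
    have hun : A ∪ closure Aᶜ = univ :=
      univ_subset_iff.1 ((union_compl_self A).ge.trans (union_subset_union_right A subset_closure))
    have h := (hind A _ hAc hA isClosed_closure hcc hun).resolve_left hne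
    rwa [closure_compl, compl_univ_iff] at h
  · exfalso
    rw [isPreconnected_iff_subset_of_disjoint] at hc
    push Not at hc
    obtain ⟨u, v, hu, hv, huv, hd, hnu, hnv⟩ := hc
    obtain ⟨hcu, hpu⟩ := isPreconnected_union_of_separation hA hAc hu hv huv hd
    obtain ⟨hcv, hpv⟩ := isPreconnected_union_of_separation hA hAc hv hu
      (union_comm u v ▸ huv) (inter_comm u v ▸ hd)
    have hun : (A ∪ u) ∪ (A ∪ v) = univ := by
      rw [← union_union_distrib_left, ← compl_subset_iff_union]
      exact huv
    rcases hind _ _ hcu ⟨hA.nonempty.inl, hpu⟩ hcv ⟨hA.nonempty.inl, hpv⟩ hun with h | h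
    · exact hnu (compl_subset_iff_union.2 h)
    · exact hnv (compl_subset_iff_union.2 h)

/-- The composant of `p` is meagre when the ambient space is an indecomposable continuum. -/
theorem isMeagre_sUnion_of_indecomposable {α : Type*} [TopologicalSpace α] [PreconnectedSpace α]
    [SecondCountableTopology α]
    (hind : ∀ A B : Set α, IsClosed A → IsConnected A → IsClosed B → IsConnected B →
      A ∪ B = univ → A = univ ∨ B = univ) (p : α) :
    IsMeagre (⋃₀ {A : Set α | IsClosed A ∧ IsConnected A ∧ A ≠ univ ∧ p ∈ A}) := by
  have hmeagre : IsMeagre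
      (⋃ U ∈ TopologicalSpace.countableBasis α, connectedComponentIn Uᶜ p) := by
    refine isMeagre_biUnion (TopologicalSpace.countable_countableBasis α) fun U hU => ?_
    -- If `p ∈ U`, the component has the junk value `∅`.
    by_cases hp : p ∈ Uᶜ
    · have hcl : IsClosed (connectedComponentIn Uᶜ p) := by
        refine isClosed_of_closure_subset ?_
        exact isPreconnected_connectedComponentIn.closure.subset_connectedComponentIn
          (subset_closure (mem_connectedComponentIn hp))
          (closure_minimal (connectedComponentIn_subset _ _)
            (TopologicalSpace.isOpen_of_mem_countableBasis hU).isClosed_compl)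
      refine (hcl.isNowhereDense_iff.2 (interior_eq_empty_of_indecomposable hind hcl
        (isConnected_connectedComponentIn_iff.2 hp) fun h => ?_)).isMeagre
      obtain ⟨x, hx⟩ := TopologicalSpace.nonempty_of_mem_countableBasis hU
      exact connectedComponentIn_subset Uᶜ p (h ▸ mem_univ x) hx
    · rw [connectedComponentIn_eq_empty hp]
      exact IsMeagre.empty
  refine hmeagre.mono ?_
  rintro x ⟨A, ⟨hAc, hA, hne, hpA⟩, hxA⟩
  obtain ⟨y, hy⟩ := nonempty_compl.2 hne
  obtain ⟨U, hU, -, hUA⟩ := (TopologicalSpace.isBasis_countableBasis α).exists_subset_of_mem_open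
    hy hAc.isOpen_compl
  exact mem_biUnion hU
    (hA.isPreconnected.subset_connectedComponentIn hpA (subset_compl_comm.1 hUA) hxA)

/-- Every composant of an indecomposable continuum `X` has empty interior in `X`. -/
theorem composant_empty_interior
    {X : Type*} [MetricSpace X] (K : Set X) (hK : IsIndecomposable K)
    (C : Set X) (hC : IsComposant K C) :
    ∀ V : Set X, IsOpen V → V ∩ K ⊆ C → V ∩ K = ∅ := by
  obtain ⟨⟨hKc, hKconn⟩, hdec⟩ := hK
  obtain ⟨p, hp, rfl⟩ := hC
  have : CompactSpace K := isCompact_iff_compactSpace.1 hKc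
  have : PreconnectedSpace K := isPreconnected_iff_preconnectedSpace.1 hKconn.isPreconnected
  have himage : ∀ A : Set K, A ≠ univ → (Subtype.val '' A : Set X) ≠ K := fun A hA h =>
    hA (Subtype.val_injective.image_injective (by rw [h, image_univ, Subtype.range_coe]))
  have hcont : ∀ A : Set K, IsClosed A → IsConnected A → IsContinuum (Subtype.val '' A : Set X) :=
    fun A hA hA' => ⟨hA.isCompact.image continuous_subtype_val,
      hA'.image _ continuous_subtype_val.continuousOn⟩
  have hind : ∀ A B : Set K, IsClosed A → IsConnected A → IsClosed B → IsConnected B →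
      A ∪ B = univ → A = univ ∨ B = univ := by
    intro A B hA hA' hB hB' hAB
    by_contra! hne
    refine hdec ⟨_, _, hcont A hA hA', Subtype.coe_image_subset K A, himage A hne.1,
      hcont B hB hB', Subtype.coe_image_subset K B, himage B hne.2, ?_⟩
    rw [← image_union, hAB, image_univ, Subtype.range_coe]
  intro V hV hVC
  have hdense := dense_of_mem_residual (isMeagre_sUnion_of_indecomposable hind ⟨p, hp⟩)
  by_contra! hne
  obtain ⟨x, hxV, hxK⟩ := hne
  obtain ⟨y, hyV, hy⟩ := hdense.inter_open_nonempty (Subtype.val ⁻¹' V)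
    (hV.preimage continuous_subtype_val) ⟨⟨x, hxK⟩, hxV⟩
  obtain ⟨L, ⟨hL, hLK, hLne, hpL⟩, hyL⟩ := hVC ⟨hyV, y.2⟩
  have hval : (Subtype.val '' (Subtype.val ⁻¹' L : Set K) : Set X) = L := by
    rw [Subtype.image_preimage_coe, inter_eq_right.2 hLK]
  refine hy ⟨Subtype.val ⁻¹' L, ⟨hL.1.isClosed.preimage continuous_subtype_val, ?_, ?_, hpL⟩, hyL⟩
  · refine ⟨⟨⟨p, hp⟩, hpL⟩, IsInducing.subtypeVal.isPreconnected_image.1 ?_⟩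
    rw [hval]
    exact hL.2.isPreconnected
  · intro h
    rw [h, image_univ, Subtype.range_coe] at hval
    exact hLne hval.symm
end

section
/- Let f : S² → S² be a polynomial-like mapping of degree d ≥ 2 and suppose that A is an indecomposable subcontinuum of J(f). Then, for any composant C of A, the image f(C) has empty interior in J(f). -/
/-!
The composant `C` lies in a countable union of proper subcontinua `K` of `A`
(`composant_subset_countable_iUnion`), and each such `K` has empty interior in `A`
(`IsIndecomposable.not_inter_subset`). Away from the fibres over the finitely many critical values,
`f` is a local homeomorphism, so the complement of these fibres is covered by countably many closed
sets `F`, each lying in an open set `U` on which `f` is injective.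

If `f '' C` contained a nonempty relatively open subset of the Julia set `J`, that subset, a locally
compact Hausdorff and hence Baire space, would be covered by the countably many compact sets
`f '' (K ∩ F)` and the finitely many critical values, so one of these would have interior in `J`.

* If `f '' (K ∩ F)` contains a nonempty `G ∩ J` with `G` open, then, since `f` maps `J` into `J` and
  is injective on `U`, the set `U ∩ f ⁻¹' G ∩ A` is contained in `K`. It is nonempty and open in
  `A`, which contradicts the emptiness of the interior of `K`.
* If it is a critical value, then `J` has an isolated point. This is impossible for the boundary of
  a simply connected region with nondegenerate complement (`not_isolated_of_simplyConnected`): such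
  a region would contain a punctured disc around the point, and on it a continuous logarithm.
-/

open Set Metric Topology Filter

/-! ### Indecomposable continua and composants -/

/-- If a subcontinuum `K` of `A` leaves a separated complement `A \ K = P ⊔ Q`, then `K ∪ P`,
written as `A \ Q` with `Q = (A \ K) ∩ v`, is again closed and connected. -/
theorem union_isPreconnected_of_separation {α : Type*} [TopologicalSpace α] {A K v : Set α}
    (hA : IsPreconnected A) (hAc : IsClosed A) (hK : IsPreconnected K) (hKc : IsClosed K)
    (hKA : K ⊆ A) (hv : IsOpen v) {u : Set α} (hu : IsOpen u)
    (huv : A \ K ⊆ u ∪ v) (hd : (A \ K) ∩ (u ∩ v) = ∅) (hQ : ((A \ K) ∩ v).Nonempty) :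
    IsClosed (A \ ((A \ K) ∩ v)) ∧ IsPreconnected (A \ ((A \ K) ∩ v)) := by
  have hclosed : ∀ {v : Set α}, IsOpen v → IsClosed (A \ ((A \ K) ∩ v)) := by
    intro v hv
    have : A \ ((A \ K) ∩ v) = A ∩ (Kᶜ ∩ v)ᶜ := by ext x; simp; tauto
    rw [this]
    exact hAc.inter (hKc.isOpen_compl.inter hv).isClosed_compl
  refine ⟨hclosed hv, ?_⟩
  -- If `K` lies in one piece `t` of a closed separation, then the other piece splits off from `A`.
  have key : ∀ t t' : Set α, IsClosed t → IsClosed t' → A \ ((A \ K) ∩ v) ⊆ t ∪ t' →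
      ((A \ ((A \ K) ∩ v)) ∩ t').Nonempty →
      ¬ ((A \ ((A \ K) ∩ v)) ∩ (t ∩ t')).Nonempty → K ⊆ t → False := by
    intro t t' ht ht' hcov hne' hemp hKt
    obtain ⟨x, hx, hxt'⟩ := hne'
    obtain ⟨q, hqAK, hqv⟩ := hQ
    have h := isPreconnected_closed_iff.1 hA
      (((A \ ((A \ K) ∩ v)) ∩ t) ∪ (A \ ((A \ K) ∩ u))) ((A \ ((A \ K) ∩ v)) ∩ t')
      (((hclosed hv).inter ht).union (hclosed hu)) ((hclosed hv).inter ht') ?_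
      ⟨q, hqAK.1, Or.inr ⟨hqAK.1, fun h => ?_⟩⟩ ⟨x, hx.1, hx, hxt'⟩
    · obtain ⟨y, hyA, hy1, hy2, hyt'⟩ := h
      rcases hy1 with hy1 | hy1
      · exact hemp ⟨y, hy2, hy1.2, hyt'⟩
      · by_cases hyK : y ∈ K
        · exact hemp ⟨y, hy2, hKt hyK, hyt'⟩
        · rcases huv ⟨hyA, hyK⟩ with h | h
          · exact hy1.2 ⟨⟨hyA, hyK⟩, h⟩
          · exact hy2.2 ⟨⟨hyA, hyK⟩, h⟩
    · intro y hy
      by_cases hyQ : y ∈ (A \ K) ∩ v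
      · refine Or.inl (Or.inr ⟨hy, fun h => ?_⟩)
        have : y ∈ (A \ K) ∩ (u ∩ v) := ⟨hyQ.1, h.2, hyQ.2⟩
        rw [hd] at this
        exact this
      · rcases hcov ⟨hy, hyQ⟩ with h | h
        · exact Or.inl (Or.inl ⟨⟨hy, hyQ⟩, h⟩)
        · exact Or.inr ⟨⟨hy, hyQ⟩, h⟩
    · have : q ∈ (A \ K) ∩ (u ∩ v) := ⟨hqAK, h.2, hqv⟩
      rw [hd] at this
      exact this
  rw [isPreconnected_closed_iff]
  intro t t' ht ht' hcov hne hne'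
  by_contra hemp
  have hKsub : K ⊆ A \ ((A \ K) ∩ v) := fun x hx => ⟨hKA hx, fun h => h.1.2 hx⟩
  have hKt : K ⊆ t ∨ K ⊆ t' := by
    by_contra! h
    obtain ⟨⟨a, haK, hat⟩, ⟨b, hbK, hbt'⟩⟩ := And.imp Set.not_subset.1 Set.not_subset.1 h
    obtain ⟨y, hyK, hy⟩ := isPreconnected_closed_iff.1 hK t t' ht ht' (hKsub.trans hcov)
      ⟨b, hbK, (hcov (hKsub hbK)).resolve_right hbt'⟩
      ⟨a, haK, (hcov (hKsub haK)).resolve_left hat⟩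
    exact hemp ⟨y, hKsub hyK, hy⟩
  rcases hKt with h | h
  · exact key t t' ht ht' hcov hne' hemp h
  · rw [union_comm] at hcov
    rw [inter_comm t t'] at hemp
    exact key _ _ ht' ht hcov hne hemp h

/-- A proper subcontinuum `K` of an indecomposable continuum `A` has empty interior in `A`:
otherwise `A` decomposes as `K ∪ closure (A \ K)` when `A \ K` is connected, and as
`(K ∪ P) ∪ (K ∪ Q)` when `A \ K = P ⊔ Q` is a separation. -/
theorem IsIndecomposable.not_inter_subset {α : Type*} [TopologicalSpace α] [T2Space α]
    {A K U : Set α} (hA : IsIndecomposable A) (hKc : IsClosed K) (hK : IsConnected K)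
    (hKA : K ⊆ A) (hne : K ≠ A) (hU : IsOpen U) (hUA : (U ∩ A).Nonempty) : ¬ U ∩ A ⊆ K := by
  intro hUK
  obtain ⟨⟨hAcomp, hAconn⟩, hdec⟩ := hA
  have hAc := hAcomp.isClosed
  have hcont : ∀ {B : Set α}, IsClosed B → IsConnected B → B ⊆ A → IsContinuum B :=
    fun hB hB' hBA => ⟨hAcomp.of_isClosed_subset hB hBA, hB'⟩
  have hAK : (A \ K).Nonempty := by
    rw [sdiff_nonempty]; exact fun h => hne (hKA.antisymm h)
  obtain ⟨y, hyU, hyA⟩ := hUA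
  by_cases hpre : IsPreconnected (A \ K)
  · have hsub : closure (A \ K) ⊆ A := closure_minimal sdiff_subset hAc
    refine hdec ⟨K, closure (A \ K), hcont hKc hK hKA, hKA, hne,
      hcont isClosed_closure ⟨hAK.closure, hpre.closure⟩ hsub, hsub, fun h => ?_, ?_⟩
    · have : y ∈ closure (A \ K) := by rw [h]; exact hyA
      obtain ⟨z, hzU, hz⟩ := mem_closure_iff.1 this U hU hyU
      exact hz.2 (hUK ⟨hzU, hz.1⟩)
    · refine (union_subset hKA hsub).antisymm fun x hx => ?_
      by_cases hxK : x ∈ K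
      · exact Or.inl hxK
      · exact Or.inr (subset_closure ⟨hx, hxK⟩)
  · rw [IsPreconnected] at hpre
    push Not at hpre
    obtain ⟨u, v, hu, hv, hcov, hnu, hnv, hemp⟩ := hpre
    have h1 := union_isPreconnected_of_separation hAconn.2 hAc hK.2 hKc hKA hv hu hcov hemp hnv
    have h2 := union_isPreconnected_of_separation hAconn.2 hAc hK.2 hKc hKA hu hv
      (by rwa [union_comm]) (by rwa [inter_comm v u]) hnu
    have hKs : ∀ v : Set α, (A \ ((A \ K) ∩ v)).Nonempty := fun v =>
      hK.1.mono fun x hx => ⟨hKA hx, fun h => h.1.2 hx⟩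
    have hpr : ∀ v : Set α, ((A \ K) ∩ v).Nonempty → A \ ((A \ K) ∩ v) ≠ A := by
      rintro v ⟨x, hx⟩ h
      exact (h.symm ▸ hx.1.1 : x ∈ A \ ((A \ K) ∩ v)).2 hx
    refine hdec ⟨_, _, hcont h1.1 ⟨hKs v, h1.2⟩ sdiff_subset, sdiff_subset, hpr v hnv,
      hcont h2.1 ⟨hKs u, h2.2⟩ sdiff_subset, sdiff_subset, hpr u hnu, ?_⟩
    refine (union_subset sdiff_subset sdiff_subset).antisymm fun x hx => ?_
    by_cases hxv : x ∈ (A \ K) ∩ v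
    · refine Or.inr ⟨hx, fun h => ?_⟩
      have : x ∈ (A \ K) ∩ (u ∩ v) := ⟨hxv.1, h.2, hxv.2⟩
      rw [hemp] at this
      exact this
    · exact Or.inl ⟨hx, hxv⟩

/-- A composant lies in a countable union of proper subcontinua: a proper subcontinuum through `p`
misses a basic open set `b` that meets `A`, hence lies in the component of `p` in `A \ b`. -/
theorem composant_subset_countable_iUnion {α : Type*} [TopologicalSpace α] [T2Space α]
    [SecondCountableTopology α] {A : Set α} (hA : IsCompact A) (p : α) :
    ∃ S : Set (Set α), S.Countable ∧
      (∀ K ∈ S, IsClosed K ∧ IsConnected K ∧ K ⊆ A ∧ K ≠ A) ∧ composant A p ⊆ ⋃₀ S := by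
  refine ⟨(fun b => connectedComponentIn (A \ b) p) ''
    {b ∈ TopologicalSpace.countableBasis α | p ∈ A \ b ∧ (b ∩ A).Nonempty},
    ((TopologicalSpace.countable_countableBasis α).mono (sep_subset _ _)).image _, ?_, ?_⟩
  · rintro _ ⟨b, ⟨hb, hp, x, hxb, hxA⟩, rfl⟩
    have hbo := TopologicalSpace.isOpen_of_mem_countableBasis hb
    refine ⟨isClosed_of_closure_subset ?_, isConnected_connectedComponentIn_iff.2 hp,
      (connectedComponentIn_subset _ _).trans sdiff_subset, fun h => ?_⟩
    · exact isPreconnected_connectedComponentIn.closure.subset_connectedComponentIn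
        (subset_closure (mem_connectedComponentIn hp))
        (closure_minimal (connectedComponentIn_subset _ _) (hA.isClosed.sdiff hbo))
    · have hx : x ∈ connectedComponentIn (A \ b) p := h.superset hxA
      exact (connectedComponentIn_subset _ _ hx).2 hxb
  · rintro x ⟨K, ⟨hK, hKA, hne, hpK⟩, hxK⟩
    obtain ⟨y, hyA, hyK⟩ : ∃ y ∈ A, y ∉ K := by
      by_contra! h; exact hne (hKA.antisymm h)
    obtain ⟨b, hb, hyb, hbK⟩ := (TopologicalSpace.isBasis_countableBasis α).exists_subset_of_mem_open
      (show y ∈ Kᶜ from hyK) hK.1.isClosed.isOpen_compl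
    have hKb : K ⊆ A \ b := fun z hz => ⟨hKA hz, fun h => hbK h hz⟩
    exact ⟨_, ⟨b, ⟨hb, hKb hpK, y, hyb, hyA⟩, rfl⟩,
      hK.2.isPreconnected.subset_connectedComponentIn hpK hKb hxK⟩

/-! ### Boundary points of simply connected regions -/

/-- Stereographic projection from `w'`, translated so that `w` goes to `0`; `g` is the chart and
`s` its inverse. -/
theorem exists_planar_chart {w w' : S2} (hne : w ≠ w') :
    ∃ (g : S2 → ℂ) (s : ℂ → S2), ContinuousOn g {w'}ᶜ ∧ Continuous s ∧
      (∀ x ≠ w', s (g x) = x) ∧ (∀ z, g (s z) = z) ∧ (∀ z, s z ≠ w') ∧ s 0 = w := by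
  have : Fact (Module.finrank ℝ (EuclideanSpace ℝ (Fin 3)) = 2 + 1) := ⟨by simp⟩
  let φ := stereographic' 2 w'
  let e := Complex.orthonormalBasisOneI.repr
  have hsrc : φ.source = {w'}ᶜ := stereographic'_source w'
  have htgt : φ.target = univ := stereographic'_target w'
  have hw : w ∈ φ.source := by rw [hsrc]; exact hne
  refine ⟨fun x => e.symm (φ x) - e.symm (φ w), fun z => φ.symm (e (z + e.symm (φ w))),
    ?_, ?_, ?_, ?_, ?_, ?_⟩
  · rw [← hsrc]
    exact (e.symm.continuous.comp_continuousOn φ.continuousOn).sub continuousOn_const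
  · have h := φ.continuousOn_symm
    rw [htgt, continuousOn_univ] at h
    exact h.comp (e.continuous.comp (by fun_prop))
  · intro x hx
    simp only [sub_add_cancel, LinearIsometryEquiv.apply_symm_apply]
    exact φ.left_inv (by rw [hsrc]; exact hx)
  · intro z
    have h := φ.right_inv (x := e (z + e.symm (φ w))) (by rw [htgt]; trivial)
    simp only [h, LinearIsometryEquiv.symm_apply_apply, add_sub_cancel_right]
  · intro z
    have h := φ.map_target (x := e (z + e.symm (φ w))) (by rw [htgt]; trivial)
    rw [hsrc] at h
    exact h
  · simp only [zero_add, LinearIsometryEquiv.apply_symm_apply]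
    exact φ.left_inv hw

theorem IsPreconnected.subset_of_inter_frontier_eq_empty {α : Type*} [TopologicalSpace α]
    {D R : Set α} (hD : IsPreconnected D) (hR : IsOpen R) (h : (D ∩ R).Nonempty)
    (hf : D ∩ frontier R = ∅) : D ⊆ R := by
  refine hD.subset_left_of_subset_union hR isClosed_closure.isOpen_compl
    (disjoint_compl_right.mono_right (compl_subset_compl.2 subset_closure)) (fun x hx => ?_) h
  by_cases hxR : x ∈ R
  · exact Or.inl hxR
  · refine Or.inr fun hxc => ?_
    have : x ∈ D ∩ frontier R := ⟨hx, hxc, by rwa [hR.interior_eq]⟩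
    rw [hf] at this
    exact this

/-- The boundary of a simply connected region whose complement has at least two points has no
isolated point. Around an isolated boundary point `w` the region would contain a punctured disc;
in a planar chart centred at `w` and based at a second omitted point, the simply connected region
would carry a continuous logarithm of the coordinate, which no punctured disc about `0` does. -/
theorem not_isolated_of_simplyConnected {R : Set S2} (hR : IsOpen R)
    (hsc : SimplyConnectedSpace R) (hnt : Rᶜ.Nontrivial) {w : S2} (hw : w ∈ frontier R)
    {G : Set S2} (hG : IsOpen G) (hwG : w ∈ G) : ¬ G ∩ frontier R ⊆ {w} := by
  intro hiso
  have hwR : w ∉ R := by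
    have := hw.2; rwa [hR.interior_eq] at this
  obtain ⟨w', hw'R, hne⟩ := hnt.exists_ne w
  obtain ⟨g, s, hg, hs, hsg, hgs, hsne, hs0⟩ := exists_planar_chart hne.symm
  obtain ⟨r, hr, hball⟩ := Metric.isOpen_iff.1 (hG.preimage hs) 0
    (show s 0 ∈ G by rwa [hs0])
  have hRw' : R ⊆ {w'}ᶜ := fun x hx h => hw'R (h ▸ hx)
  have : Fact (Module.finrank ℝ (EuclideanSpace ℝ (Fin 3)) = 2 + 1) := ⟨by simp⟩
  have : LocallyPathConnectedSpace S2 :=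
    ChartedSpace.locallyPathConnectedSpace (EuclideanSpace ℝ (Fin 2)) S2
  -- A continuous branch of `log g` on `R`.
  obtain ⟨L, hLc, hL⟩ := Complex.exists_continuousOn_eqOn_exp_comp
    (show IsSimplyConnected R from hsc) hR (hg.mono hRw') (by
      rintro ⟨x, hx, hx0⟩
      apply hwR
      rw [← hs0, ← hx0, hsg x (hRw' hx)]
      exact hx)
  -- `exp` maps the half-plane `T` onto the punctured disc of radius `r`.
  set T : Set ℂ := {z | z.re < Real.log r} with hT
  have hTconn : IsPreconnected T := (convex_halfSpace_re_lt (Real.log r)).isPreconnected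
  have hmem : ∀ z ∈ T, s (Complex.exp z) ∈ G := by
    intro z hz
    apply hball
    rw [mem_ball_zero_iff, Complex.norm_exp]
    exact (Real.lt_log_iff_exp_lt hr).1 hz
  have hcs : Continuous fun z => s (Complex.exp z) := hs.comp Complex.continuous_exp
  have hDR : (fun z => s (Complex.exp z)) '' T ⊆ R := by
    refine (hTconn.image _ hcs.continuousOn).subset_of_inter_frontier_eq_empty hR ?_ ?_
    · have hopen : IsOpen ({w'}ᶜ ∩ g ⁻¹' ball 0 r) :=
        hg.isOpen_inter_preimage isClosed_singleton.isOpen_compl isOpen_ball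
      obtain ⟨x, ⟨hxw', hxr⟩, hxR⟩ := mem_closure_iff.1 hw.1 _ hopen
        ⟨hne.symm, by
          have : g w = 0 := by rw [← hs0, hgs]
          simpa [this] using hr⟩
      have hgx : g x ≠ 0 := by
        intro h
        apply hwR
        rw [← hs0, ← h, hsg x hxw']
        exact hxR
      refine ⟨x, ⟨Complex.log (g x), ?_, ?_⟩, hxR⟩
      · rw [hT, mem_ofPred_eq, Complex.log_re]
        exact Real.log_lt_log (norm_pos_iff.2 hgx) (by simpa using hxr)
      · simp only [Complex.exp_log hgx]
        exact hsg x hxw'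
    · rw [eq_empty_iff_forall_notMem]
      rintro _ ⟨⟨z, hz, rfl⟩, hzf⟩
      have h : s (Complex.exp z) = w := hiso ⟨hmem z hz, hzf⟩
      have h2 := congrArg g h
      rw [← hs0, hgs, hgs] at h2
      exact Complex.exp_ne_zero z h2
  have hmaps : ∀ z ∈ T, s (Complex.exp z) ∈ R := fun z hz => hDR ⟨z, hz, rfl⟩
  -- `L ∘ s ∘ exp` and a translate of the identity are two lifts of the same map through `exp`.
  set M : ℂ → ℂ := fun z => L (s (Complex.exp z)) with hM
  have hMexp : ∀ z ∈ T, Complex.exp (M z) = Complex.exp z := fun z hz => by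
    have := hL (hmaps z hz)
    simpa [hgs] using this
  have hMc : ContinuousOn M T := hLc.comp hcs.continuousOn hmaps
  set z₀ : ℂ := ((Real.log r - 1 : ℝ) : ℂ) with hz₀
  have hz₀T : z₀ ∈ T := by simp [hT, hz₀]
  have hper : z₀ + 2 * Real.pi * Complex.I ∈ T := by simp [hT, hz₀]
  have heq : T.EqOn M (fun z => z + (M z₀ - z₀)) := by
    refine Complex.isCoveringMap_exp.eqOn_of_comp_eqOn hTconn hMc (by fun_prop) ?_ hz₀T (by ring)
    intro z hz
    apply Subtype.ext
    simp only [Function.comp_apply]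
    rw [hMexp z hz, Complex.exp_add, Complex.exp_sub, hMexp z₀ hz₀T,
      div_self (Complex.exp_ne_zero _), mul_one]
  have h1 : M (z₀ + 2 * Real.pi * Complex.I) = M z₀ := by
    simp only [hM, Complex.exp_periodic z₀]
  have h2 := heq hper
  simp only [h1] at h2
  have h3 : (2 * Real.pi * Complex.I : ℂ) = 0 := by linear_combination -h2
  exact Complex.two_pi_I_ne_zero h3

/-! ### Images of composants -/

/-- If `A` is an indecomposable subcontinuum of the Julia set of a polynomial-like
mapping of degree `d ≥ 2`, then the image `f(C)` of any composant `C` of `A` has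
empty interior in `J(f)`. -/
theorem image_of_composant_empty_interior
    (f : S2 → S2) (d : ℕ) (R : Set S2) (c : S2)
    (hd : 2 ≤ d) (hf : IsPolynomialLike f d R c)
    (A : Set S2) (hA : IsIndecomposable A) (hAJ : A ⊆ frontier R)
    (C : Set S2) (hC : IsComposant A C) :
    ∀ V : Set S2, IsOpen V → V ∩ frontier R ⊆ f '' C → V ∩ frontier R = ∅ := by
  obtain ⟨⟨hfc, Crit, hCrit, -, hcov, -⟩, hRo, -, hRsc, hnt, hinv, -, -⟩ := hf
  obtain ⟨p, -, rfl⟩ := hC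
  intro V hV hsub
  by_contra hne
  rw [← ne_eq, ← nonempty_iff_ne_empty] at hne
  have hJ : ∀ x ∈ frontier R, f x ∈ frontier R := by
    rw [hRo.frontier_eq]
    rintro x ⟨hxc, hxR⟩
    refine ⟨?_, fun h => hxR (hinv ▸ h)⟩
    exact map_mem_closure hfc hxc fun y hy => by rw [← hinv] at hy; exact hy
  obtain ⟨S, hSc, hS, hCS⟩ := composant_subset_countable_iUnion hA.1.1 p
  -- Off the fibres over critical values, countably many closed sets on which `f` is injective.
  have hF : ∀ x ∈ f ⁻¹' (f '' Crit)ᶜ, ∃ F U : Set S2,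
      F ∈ 𝓝 x ∧ IsClosed F ∧ IsOpen U ∧ F ⊆ U ∧ InjOn f U := by
    intro x hx
    obtain ⟨e, hxe, hfe⟩ := hcov.isLocalHomeomorphOn x hx
    obtain ⟨F, hF, hFc, hFe⟩ := exists_mem_nhds_isClosed_subset (e.open_source.mem_nhds hxe)
    exact ⟨F, e.source, hF, hFc, e.open_source, hFe, hfe ▸ e.injOn⟩
  choose! F U hFx hFc hUo hFU hinj using hF
  obtain ⟨t, htE, htc, htcov⟩ := TopologicalSpace.countable_cover_nhdsWithin
    (fun x hx => mem_nhdsWithin_of_mem_nhds (hFx x hx))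
  have : Countable S := hSc
  have : Countable t := htc
  have : Countable (f '' Crit) := (hCrit.image f).countable
  have : LocallyCompactSpace ↥(V ∩ frontier R) :=
    (hV.isLocallyClosed.inter isClosed_frontier.isLocallyClosed).locallyCompactSpace
  have : Nonempty ↥(V ∩ frontier R) := hne.to_subtype
  let P : (S × t) ⊕ (f '' Crit) → Set S2 :=
    Sum.elim (fun q => f '' (q.1 ∩ F q.2)) (fun y => {(y : S2)})
  have hPc : ∀ i, IsClosed (P i) := by
    rintro (⟨K, x⟩ | y)
    · exact (((hS K K.2).1.inter (hFc x (htE x.2))).isCompact.image hfc).isClosed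
    · exact isClosed_singleton
  obtain ⟨i, hi⟩ := nonempty_interior_of_iUnion_of_closed
    (f := fun i => ((↑) : ↥(V ∩ frontier R) → S2) ⁻¹' P i)
    (fun i => (hPc i).preimage continuous_subtype_val) (by
      rw [eq_univ_iff_forall]
      rintro ⟨y, hy⟩
      rw [mem_iUnion]
      obtain ⟨x, hxC, rfl⟩ := hsub hy
      by_cases hcr : f x ∈ f '' Crit
      · exact ⟨Sum.inr ⟨f x, hcr⟩, rfl⟩
      · obtain ⟨K, hK, hxK⟩ := hCS hxC
        obtain ⟨x', hx', hxF⟩ := mem_iUnion₂.1 (htcov hcr)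
        exact ⟨Sum.inl ⟨⟨K, hK⟩, ⟨x', hx'⟩⟩, x, ⟨hxK, hxF⟩, rfl⟩)
  obtain ⟨⟨y, hyV, hyJ⟩, hy⟩ := hi
  obtain ⟨O, hO, hOo, hyO⟩ := mem_interior.1 hy
  obtain ⟨W, hW, rfl⟩ := isOpen_induced_iff.1 hOo
  have hWP : ∀ z ∈ (W ∩ V) ∩ frontier R, z ∈ P i := fun z hz =>
    hO (show (⟨z, hz.1.2, hz.2⟩ : ↥(V ∩ frontier R)) ∈ Subtype.val ⁻¹' W from hz.1.1)
  have hyWV : y ∈ W ∩ V := ⟨hyO, hyV⟩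
  have hyP := hWP y ⟨hyWV, hyJ⟩
  rcases i with ⟨K, x₀⟩ | q
  · obtain ⟨hKc, hKconn, hKA, hKne⟩ := hS K K.2
    obtain ⟨x, ⟨hxK, hxF⟩, rfl⟩ := hyP
    have hx₀ := htE x₀.2
    refine hA.not_inter_subset hKc hKconn hKA hKne
      ((hUo x₀ hx₀).inter ((hW.inter hV).preimage hfc))
      ⟨x, ⟨hFU x₀ hx₀ hxF, hyWV⟩, hKA hxK⟩ ?_
    rintro a ⟨⟨haU, haW⟩, haA⟩
    obtain ⟨b, ⟨hbK, hbF⟩, hba⟩ := hWP (f a) ⟨haW, hJ a (hAJ haA)⟩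
    exact hinj x₀ hx₀ (hFU x₀ hx₀ hbF) haU hba ▸ hbK
  · refine not_isolated_of_simplyConnected hRo hRsc hnt hyJ (hW.inter hV) hyWV fun z hz => ?_
    have h1 : z = q := hWP z hz
    have h2 : y = q := hyP
    rw [mem_singleton_iff, h1, h2]
end

section
/- If {A_1, …, A_n} is an irreducible decomposition of a continuum X, then every A_i has nonempty interior in X. -/
open Set Metric Topology Filter

/-- Every piece of an irreducible decomposition of a continuum `X` has nonempty
interior in `X`. -/
theorem pieces_have_nonempty_interior
    {α : Type*} [MetricSpace α] (X : Set α) (hX : IsContinuum X)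
    {n : ℕ} (A : Fin n → Set α) (hA : IsIrreducibleDecomposition X A) :
    ∀ i, ∃ V : Set α, IsOpen V ∧ (V ∩ X).Nonempty ∧ V ∩ X ⊆ A i := by
  intro i
  -- The complement of the union of the other pieces is open, since each piece is compact.
  refine ⟨(⋃ j ∈ ({i}ᶜ : Set (Fin n)), A j)ᶜ, ?_, ?_, ?_⟩
  · exact ((Set.toFinite _).isClosed_biUnion fun j _ =>
      (hA.1 j).1.1.1.isClosed).isOpen_compl
  · obtain ⟨x, hx, hxo⟩ := Set.not_subset.1 (hA.2.2 i)
    exact ⟨x, hxo, (hA.1 i).2 hx⟩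
  · rintro x ⟨hxo, hxX⟩
    rw [hA.2.1] at hxX
    obtain ⟨j, hj⟩ := Set.mem_iUnion.1 hxX
    by_cases h : j = i
    · exact h ▸ hj
    · exact absurd (Set.mem_biUnion (show j ∈ ({i}ᶜ : Set (Fin n)) from h) hj) hxo
end
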